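/- arXiv:1206.5159 — 2 statements merged into one kernel-verified Lean document; each statement's English description precedes it below -/
import Mathlib

section
/- For every integer k ≥ 1, there exists a simple graph G' that has a proper representation in which every vertex is represented by an axis-parallel curve with at most k bends, but G' has no representation (proper or not) in which every vertex is represented by an axis-parallel curve with at most k−1 bends. -/
open Set Metric

/-- A point of the plane. -/
abbrev Pt : Type := ℝ × ℝ

/-- The trace (image) of a curve parametrized over `[0,1]`. -/
def Im (γ : ℝ → Pt) : Set Pt := γ '' Icc 0 1

/-- `γ` is affine on the interval `[s,t]`. -/
def AffOn (γ : ℝ → Pt) (s t : ℝ) : Prop :=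
  ∃ a d : Pt, ∀ x ∈ Icc s t, γ x = (a.1 + x * d.1, a.2 + x * d.2)

/-- `γ` is affine on `[s,t]` with a horizontal or vertical direction. -/
def AxisAffOn (γ : ℝ → Pt) (s t : ℝ) : Prop :=
  ∃ a d : Pt, (d.1 = 0 ∨ d.2 = 0) ∧ ∀ x ∈ Icc s t, γ x = (a.1 + x * d.1, a.2 + x * d.2)

/-- `γ` restricted to `[0,1]` is a simple piecewise linear curve consisting of at most
`n` straight segments. -/
def IsPLCurveN (n : ℕ) (γ : ℝ → Pt) : Prop :=
  InjOn γ (Icc 0 1) ∧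
    ∃ t : Fin (n + 1) → ℝ, t 0 = 0 ∧ t (Fin.last n) = 1 ∧ Monotone t ∧
      ∀ i : Fin n, AffOn γ (t i.castSucc) (t i.succ)

/-- `γ` is a simple piecewise linear curve (finitely many segments). -/
def IsPLCurve (γ : ℝ → Pt) : Prop := ∃ n, IsPLCurveN n γ

/-- `γ` restricted to `[0,1]` is a simple rectilinear (axis-parallel) curve consisting of
at most `n` horizontal or vertical straight segments. -/
def IsRectCurveN (n : ℕ) (γ : ℝ → Pt) : Prop :=
  InjOn γ (Icc 0 1) ∧
    ∃ t : Fin (n + 1) → ℝ, t 0 = 0 ∧ t (Fin.last n) = 1 ∧ Monotone t ∧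
      ∀ i : Fin n, AxisAffOn γ (t i.castSucc) (t i.succ)

/-- `γ` is a simple rectilinear (axis-parallel) piecewise linear curve. -/
def IsRectCurve (γ : ℝ → Pt) : Prop := ∃ n, IsRectCurveN n γ

/-- A `k`-bend axis-parallel curve: a simple curve that is a concatenation of at most
`k+1` horizontal or vertical straight segments (hence has at most `k` bends). -/
def IsKBendCurve (k : ℕ) (γ : ℝ → Pt) : Prop := IsRectCurveN (k + 1) γ

/-- `R` is an intersection representation of `G` by curves:
two distinct vertices are adjacent iff their curves meet. -/
def Represents {V : Type*} (G : SimpleGraph V) (R : V → ℝ → Pt) : Prop :=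
  ∀ u v : V, u ≠ v → ((Im (R u) ∩ Im (R v)).Nonempty ↔ G.Adj u v)

/-- The set of intersection points of a representation: points lying on (at least)
two distinct curves. -/
def InPts {V : Type*} (R : V → ℝ → Pt) : Set Pt :=
  {p | ∃ u v : V, u ≠ v ∧ p ∈ Im (R u) ∧ p ∈ Im (R v)}

/-- The set `B` crosses (transversally, from one side to the other) the set `A` at `p`:
in every small ball around `p` there are points of `B` off `A` that cannot be joined by a
connected subset of the ball avoiding `A`. -/
def CrossesAt (A B : Set Pt) (p : Pt) : Prop :=
  ∃ ε₀ > (0:ℝ), ∀ ε : ℝ, 0 < ε → ε ≤ ε₀ →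
    ∃ x y : Pt, x ∈ (B ∩ ball p ε) \ A ∧ y ∈ (B ∩ ball p ε) \ A ∧
      ∀ C : Set Pt, C ⊆ ball p ε \ A → IsConnected C → ¬(x ∈ C ∧ y ∈ C)

/-- A proper representation: finitely many intersection points (in particular no two
curves overlap), every intersection point lies on exactly two curves which cross
(do not touch) there, and no endpoint of a curve lies on another curve. -/
def IsProperRep {V : Type*} (R : V → ℝ → Pt) : Prop :=
  (InPts R).Finite ∧
    (∀ p : Pt, ∀ u v w : V, u ≠ v → u ≠ w → v ≠ w →
      ¬(p ∈ Im (R u) ∧ p ∈ Im (R v) ∧ p ∈ Im (R w))) ∧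
    (∀ u v : V, u ≠ v → R u 0 ∉ Im (R v) ∧ R u 1 ∉ Im (R v)) ∧
    (∀ u v : V, u ≠ v → ∀ p ∈ Im (R u) ∩ Im (R v),
      CrossesAt (Im (R u)) (Im (R v)) p ∧ CrossesAt (Im (R v)) (Im (R u)) p)

/-- Membership in the class `B_k`-VPG. -/
def InBkVPG (k : ℕ) {V : Type*} (G : SimpleGraph V) : Prop :=
  ∃ R : V → ℝ → Pt, (∀ v, IsKBendCurve k (R v)) ∧ Represents G R

/-- Membership in the class SEG of intersection graphs of straight line segments. -/
def InSEG {V : Type*} (G : SimpleGraph V) : Prop :=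
  ∃ S : V → Pt × Pt, (∀ v, (S v).1 ≠ (S v).2) ∧
    ∀ u v : V, u ≠ v →
      ((segment ℝ (S u).1 (S u).2 ∩ segment ℝ (S v).1 (S v).2).Nonempty ↔ G.Adj u v)

/-- Membership in the class 3-DIR: intersection graphs of straight line segments using
at most three distinct directions (slopes). -/
def In3DIR {V : Type*} (G : SimpleGraph V) : Prop :=
  ∃ D : Fin 3 → Pt, ∃ S : V → Pt × Pt,
    (∀ v, (S v).1 ≠ (S v).2) ∧
    (∀ v, ∃ i : Fin 3, ∃ c : ℝ, (S v).2 - (S v).1 = c • D i) ∧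
    ∀ u v : V, u ≠ v →
      ((segment ℝ (S u).1 (S u).2 ∩ segment ℝ (S v).1 (S v).2).Nonempty ↔ G.Adj u v)

/-- `L` is a (straight) line in the plane. -/
def IsLine (L : Set Pt) : Prop :=
  ∃ p d : Pt, d ≠ 0 ∧ L = {x : Pt | ∃ r : ℝ, x = (p.1 + r * d.1, p.2 + r * d.2)}

/-- `z` is a bend point of the set `S` (trace of a curve): `S` is not locally straight
at `z`, i.e. no neighbourhood of `z` in `S` is contained in a line. -/
def IsBendPt (S : Set Pt) (z : Pt) : Prop :=
  z ∈ S ∧ ∀ ε > (0:ℝ), ¬ ∃ L : Set Pt, IsLine L ∧ S ∩ ball z ε ⊆ L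

/-!
Graphs are separated by counting traces. Relative to a fixed family of `M` curves with at most `k`
segments each, a curve with at most `k` segments meets the family in one of `O(M ^ (k + 2))` ways:
the pattern depends only on the cells of the grid of all coordinates of the family that contain
the vertices of the curve, and each segment brings in one new coordinate besides the two of the
starting point. One more bend gives one more coordinate. Concretely, a staircase with `k + 1`
segments has `k + 3` bend coordinates, which may be chosen independently from `N` values each, and
`O(N)` short perpendicular segments, the rulers, suffice to read all of them off. So `N ^ (k + 3)`
staircases have distinct traces on `O(N)` rulers, which is impossible for curves with `k` segments
once `N` is large. Translating the integer coordinates of every curve by a different fraction makes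
all coordinates of different curves distinct, and then the representation is proper.
-/

open Prod (swap)

/-! ### Axis-parallel chains -/

section Chains

/-- A sequence of points, consecutive ones sharing a coordinate: the vertices of an axis-parallel
polygonal line. -/
def AxisChain {α β : Type*} {n : ℕ} (q : Fin (n + 1) → α × β) : Prop :=
  ∀ i : Fin n, (q i.castSucc).1 = (q i.succ).1 ∨ (q i.castSucc).2 = (q i.succ).2

/-- The union of the boxes spanned by consecutive points of a sequence. For an axis-parallel chain
in the plane the boxes are its segments. -/
def chainTrace {α : Type*} [Lattice α] {n : ℕ} (q : Fin (n + 1) → α) : Set α :=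
  ⋃ i : Fin n, uIcc (q i.castSucc) (q i.succ)

/-- All first and second coordinates of the points of a sequence. -/
def coords {α : Type*} [DecidableEq α] {n : ℕ} (q : Fin (n + 1) → α × α) : Finset α :=
  Finset.univ.image (Prod.fst ∘ q) ∪ Finset.univ.image (Prod.snd ∘ q)

/-- The curve `γ` runs from the first to the last point of the axis-parallel chain `q`, and its
trace consists of the segments of `q`. -/
structure HasVertices (γ : ℝ → Pt) {n : ℕ} (q : Fin (n + 1) → Pt) : Prop where
  start : γ 0 = q 0
  finish : γ 1 = q (Fin.last n)
  axisChain : AxisChain q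
  im_eq : Im γ = chainTrace q

variable {α β : Type*} {n : ℕ}

lemma AxisChain.map {α' β' : Type*} {q : Fin (n + 1) → α × β} (hq : AxisChain q) (f : α → α')
    (g : β → β') : AxisChain (Prod.map f g ∘ q) :=
  fun i => (hq i).imp (congrArg f) (congrArg g)

lemma AxisChain.swap {q : Fin (n + 1) → α × β} (hq : AxisChain q) : AxisChain (swap ∘ q) :=
  fun i => (hq i).symm

lemma mem_chainTrace [Lattice α] {q : Fin (n + 1) → α} {p : α} :
    p ∈ chainTrace q ↔ ∃ i : Fin n, p ∈ uIcc (q i.castSucc) (q i.succ) :=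
  mem_iUnion

lemma mem_chainTrace_swap [Lattice α] [Lattice β] {q : Fin (n + 1) → α × β} {p : α × β} :
    p.swap ∈ chainTrace (swap ∘ q) ↔ p ∈ chainTrace q := by
  simp only [mem_chainTrace, uIcc_prod_eq, mem_prod, Function.comp_apply, Prod.fst_swap,
    Prod.snd_swap, and_comm]

lemma chainTrace_inter_nonempty [Lattice α] {m : ℕ} {q : Fin (m + 1) → α} {r : Fin (n + 1) → α} :
    (chainTrace q ∩ chainTrace r).Nonempty ↔ ∃ (i : Fin m) (j : Fin n),
      (uIcc (q i.castSucc) (q i.succ) ∩ uIcc (r j.castSucc) (r j.succ)).Nonempty := by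
  simp only [chainTrace, iUnion_inter, inter_iUnion, nonempty_iUnion]
  exact exists_comm

variable [DecidableEq α]

lemma fst_mem_coords (q : Fin (n + 1) → α × α) (i : Fin (n + 1)) : (q i).1 ∈ coords q :=
  Finset.mem_union_left _ (Finset.mem_image_of_mem _ (Finset.mem_univ i))

lemma snd_mem_coords (q : Fin (n + 1) → α × α) (i : Fin (n + 1)) : (q i).2 ∈ coords q :=
  Finset.mem_union_right _ (Finset.mem_image_of_mem _ (Finset.mem_univ i))

lemma mem_coords {q : Fin (n + 1) → α × α} {x : α} :
    x ∈ coords q ↔ ∃ i, (q i).1 = x ∨ (q i).2 = x := by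
  simp only [coords, Finset.mem_union, Finset.mem_image, Finset.mem_univ, true_and,
    Function.comp_apply, exists_or]

lemma coords_swap (q : Fin (n + 1) → α × α) : coords (swap ∘ q) = coords q :=
  Finset.union_comm _ _

lemma card_coords_le (q : Fin (n + 1) → α × α) : (coords q).card ≤ 2 * (n + 1) := by
  have card_image_le (f : Fin (n + 1) → α) : (Finset.univ.image f).card ≤ n + 1 :=
    Finset.card_image_le.trans_eq (Finset.card_fin _)
  calc (coords q).card ≤ _ := Finset.card_union_le _ _
    _ ≤ 2 * (n + 1) := by
      rw [two_mul]
      exact add_le_add (card_image_le _) (card_image_le _)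

end Chains

/-! ### The vertices of an axis-parallel curve -/

section Vertices

variable {γ : ℝ → Pt} {n : ℕ}

lemma image_mul_add_Icc (a d : ℝ) {s t : ℝ} (hst : s ≤ t) :
    (fun x => a + x * d) '' Icc s t = uIcc (a + s * d) (a + t * d) := by
  rw [← uIcc_of_le hst, ← image_const_add_uIcc, ← image_mul_const_uIcc, image_image]

lemma AxisAffOn.image_Icc {s t : ℝ} (h : AxisAffOn γ s t) (hst : s ≤ t) :
    γ '' Icc s t = uIcc (γ s) (γ t) := by
  obtain ⟨a, d, hd | hd, hγ⟩ := h <;>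
    rw [image_congr hγ, hγ s ⟨le_rfl, hst⟩, hγ t ⟨hst, le_rfl⟩, ← uIcc_prod_uIcc,
      ← image_mul_add_Icc _ _ hst, ← image_mul_add_Icc _ _ hst] <;>
    simp only [hd, mul_zero, add_zero]
  · rw [(nonempty_Icc.2 hst).image_const, singleton_prod, image_image]
  · rw [(nonempty_Icc.2 hst).image_const, prod_singleton, image_image]

lemma AxisAffOn.fst_eq_or_snd_eq {s t : ℝ} (h : AxisAffOn γ s t) (hst : s ≤ t) :
    (γ s).1 = (γ t).1 ∨ (γ s).2 = (γ t).2 := by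
  obtain ⟨a, d, hd, hγ⟩ := h
  rw [hγ s ⟨le_rfl, hst⟩, hγ t ⟨hst, le_rfl⟩]
  exact hd.imp (fun hd => by simp only [hd, mul_zero]) (fun hd => by simp only [hd, mul_zero])

lemma iUnion_Icc_castSucc_succ {α : Type*} [LinearOrder α] {t : Fin (n + 1) → α} (ht : Monotone t)
    (hn : n ≠ 0) : ⋃ i : Fin n, Icc (t i.castSucc) (t i.succ) = Icc (t 0) (t (Fin.last n)) := by
  refine Subset.antisymm
    (iUnion_subset fun i => Icc_subset_Icc (ht (Fin.zero_le _)) (ht (Fin.le_last _)))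
    fun x hx => ?_
  by_contra hnot
  simp only [mem_iUnion, mem_Icc, not_exists, not_and, not_le] at hnot
  have le_x : ∀ j, t j ≤ x := Fin.induction hx.1 fun j hj => (hnot j hj).le
  obtain ⟨m, rfl⟩ := Nat.exists_eq_succ_of_ne_zero hn
  exact (hnot (Fin.last m) (le_x _)).not_ge hx.2

lemma hasVertices_of_axisAffOn {t : Fin (n + 1) → ℝ} (ht0 : t 0 = 0) (ht1 : t (Fin.last n) = 1)
    (ht : Monotone t) (hγ : ∀ i : Fin n, AxisAffOn γ (t i.castSucc) (t i.succ)) :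
    HasVertices γ (γ ∘ t) where
  start := by rw [Function.comp_apply, ht0]
  finish := by rw [Function.comp_apply, ht1]
  axisChain i := (hγ i).fst_eq_or_snd_eq (ht i.castSucc_le_succ)
  im_eq := by
    have hn : n ≠ 0 := by
      rintro rfl
      exact zero_ne_one (ht0.symm.trans ht1)
    rw [Im, ← ht0, ← ht1, ← iUnion_Icc_castSucc_succ ht hn, image_iUnion]
    exact iUnion_congr fun i => (hγ i).image_Icc (ht i.castSucc_le_succ)

lemma IsRectCurveN.exists_hasVertices (hγ : IsRectCurveN n γ) :
    ∃ q : Fin (n + 1) → Pt, HasVertices γ q :=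
  let ⟨_, _, ht0, ht1, ht, haff⟩ := hγ
  ⟨_, hasVertices_of_axisAffOn ht0 ht1 ht haff⟩

end Vertices

/-! ### Counting traces -/

section Cells

variable {α : Type*} [LinearOrder α]

/-- The position of `x` among the elements of `S`: the points of `S` and the gaps between them are
the cells of a subdivision of the line, and `cell S x` numbers the cell containing `x`. -/
def cell (S : Finset α) (x : α) : Fin (2 * S.card + 1) :=
  ⟨(S.filter (· < x)).card + (S.filter (· ≤ x)).card, by
    have := S.card_filter_le (· < x)
    have := S.card_filter_le (· ≤ x)
    omega⟩

lemma compare_iff_of_cell_eq {S : Finset α} {x y s : α} (h : cell S x = cell S y) (hs : s ∈ S) :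
    (s ≤ x ↔ s ≤ y) ∧ (x ≤ s ↔ y ≤ s) := by
  wlog hxy : x ≤ y generalizing x y
  · exact (this h.symm (le_of_not_ge hxy)).imp Iff.symm Iff.symm
  have hlt : S.filter (· < x) ⊆ S.filter (· < y) :=
    Finset.monotone_filter_right S fun _ _ hs => hs.trans_le hxy
  have hle : S.filter (· ≤ x) ⊆ S.filter (· ≤ y) :=
    Finset.monotone_filter_right S fun _ _ hs => hs.trans hxy
  have hcard : (S.filter (· < x)).card + (S.filter (· ≤ x)).card =
    (S.filter (· < y)).card + (S.filter (· ≤ y)).card := congrArg Fin.val h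
  have := Finset.card_le_card hlt
  have := Finset.card_le_card hle
  have hlt_eq := Finset.ext_iff.1 (Finset.eq_of_subset_of_card_le hlt (by omega)) s
  have hle_eq := Finset.ext_iff.1 (Finset.eq_of_subset_of_card_le hle (by omega)) s
  simp only [Finset.mem_filter, hs, true_and] at hlt_eq hle_eq
  exact ⟨hle_eq, by rw [← not_lt, hlt_eq, not_lt]⟩

lemma uIcc_inter_uIcc_nonempty {β : Type*} [Lattice β] (a b c d : β) :
    (uIcc a b ∩ uIcc c d).Nonempty ↔ a ⊓ b ≤ c ⊔ d ∧ c ⊓ d ≤ a ⊔ b := by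
  rw [uIcc, uIcc, Icc_inter_Icc, nonempty_Icc, sup_le_iff, le_inf_iff, le_inf_iff]
  exact ⟨fun h => ⟨h.1.2, h.2.1⟩, fun h => ⟨⟨inf_le_sup, h.1⟩, h.2, inf_le_sup⟩⟩

lemma uIcc_inter_uIcc_nonempty_congr {S : Finset α} {a b a' b' c d : α}
    (ha : cell S a = cell S a') (hb : cell S b = cell S b') (hc : c ∈ S) (hd : d ∈ S) :
    (uIcc a b ∩ uIcc c d).Nonempty ↔ (uIcc a' b' ∩ uIcc c d).Nonempty := by
  have hac := compare_iff_of_cell_eq ha hc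
  have had := compare_iff_of_cell_eq ha hd
  have hbc := compare_iff_of_cell_eq hb hc
  have hbd := compare_iff_of_cell_eq hb hd
  simp only [uIcc_inter_uIcc_nonempty, inf_le_iff, le_sup_iff, hac, had, hbc, hbd]

lemma chainTrace_inter_nonempty_congr {S : Finset α} {m n : ℕ} {q q' : Fin (m + 1) → α × α}
    {r : Fin (n + 1) → α × α} (hr : coords r ⊆ S)
    (hq : Prod.map (cell S) (cell S) ∘ q = Prod.map (cell S) (cell S) ∘ q') :
    (chainTrace q ∩ chainTrace r).Nonempty ↔ (chainTrace q' ∩ chainTrace r).Nonempty := by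
  have hfst (i) : cell S (q i).1 = cell S (q' i).1 := congrArg Prod.fst (congrFun hq i)
  have hsnd (i) : cell S (q i).2 = cell S (q' i).2 := congrArg Prod.snd (congrFun hq i)
  rw [chainTrace_inter_nonempty, chainTrace_inter_nonempty]
  refine exists_congr fun i => exists_congr fun j => ?_
  simp only [uIcc_prod_eq, prod_inter_prod, prod_nonempty_iff]
  exact and_congr
    (uIcc_inter_uIcc_nonempty_congr (hfst _) (hfst _) (hr (fst_mem_coords r _))
      (hr (fst_mem_coords r _)))
    (uIcc_inter_uIcc_nonempty_congr (hsnd _) (hsnd _) (hr (snd_mem_coords r _))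
      (hr (snd_mem_coords r _)))

end Cells

section TraceBound

/-- The index set of the curves of the family `ρ` met by `γ`. -/
def traceOn {ι : Type*} (ρ : ι → ℝ → Pt) (γ : ℝ → Pt) : Set ι :=
  {i | (Im γ ∩ Im (ρ i)).Nonempty}

/-- The first point determines one coordinate of the second, the second point one of the third,
and so on; only one new coordinate is free in each step. -/
lemma card_axisChain_le (C : Type*) [Finite C] (n : ℕ) :
    Nat.card {w : Fin (n + 1) → C × C // AxisChain w} ≤
      Nat.card C ^ 2 * (2 * Nat.card C) ^ n := by
  classical
  let step (p p' : C × C) : C ⊕ C := if p.1 = p'.1 then .inl p'.2 else .inr p'.1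
  have step_inj {p p₁ p₂ : C × C} (h₁ : p.1 = p₁.1 ∨ p.2 = p₁.2) (h₂ : p.1 = p₂.1 ∨ p.2 = p₂.2)
      (h : step p p₁ = step p p₂) : p₁ = p₂ := by
    simp only [step] at h
    grind
  let code (w : {w : Fin (n + 1) → C × C // AxisChain w}) : (C × C) × (Fin n → C ⊕ C) :=
    (w.1 0, fun i => step (w.1 i.castSucc) (w.1 i.succ))
  have code_inj : Function.Injective code := by
    rintro ⟨w, hw⟩ ⟨w', hw'⟩ h
    obtain ⟨h0, hstep⟩ := Prod.ext_iff.1 h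
    refine Subtype.ext (funext (Fin.induction h0 fun i hi => ?_))
    change w i.castSucc = w' i.castSucc at hi
    exact step_inj (hw i) (hi ▸ hw' i) ((congrFun hstep i).trans (by rw [hi]))
  calc Nat.card {w : Fin (n + 1) → C × C // AxisChain w}
      ≤ Nat.card ((C × C) × (Fin n → C ⊕ C)) := Nat.card_le_card_of_injective code code_inj
    _ = Nat.card C ^ 2 * (2 * Nat.card C) ^ n := by
      simp only [Nat.card_prod, Nat.card_fun, Nat.card_sum, Nat.card_fin]
      ring

theorem card_le_of_injective_traceOn {m n : ℕ} {ι α : Type*} [Finite ι] {ρ : ι → ℝ → Pt}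
    {γ : α → ℝ → Pt} (hρ : ∀ i, IsRectCurveN m (ρ i)) (hγ : ∀ a, IsRectCurveN n (γ a))
    (hinj : Function.Injective fun a => traceOn ρ (γ a)) :
    Nat.card α ≤ 2 ^ n * (4 * (m + 1) * Nat.card ι + 1) ^ (n + 2) := by
  have := Fintype.ofFinite ι
  choose r hr using fun i => (hρ i).exists_hasVertices
  choose q hq using fun a => (hγ a).exists_hasVertices
  let S : Finset ℝ := Finset.univ.biUnion fun i => coords (r i)
  have hrS (i) : coords (r i) ⊆ S :=
    Finset.subset_biUnion_of_mem (fun i => coords (r i)) (Finset.mem_univ i)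
  have hS : S.card ≤ Nat.card ι * (2 * (m + 1)) := by
    rw [Nat.card_eq_fintype_card]
    exact Finset.card_biUnion_le_card_mul _ _ _ fun i _ => card_coords_le (r i)
  let cells (a : α) : {w : Fin (n + 1) → _ // AxisChain w} :=
    ⟨Prod.map (cell S) (cell S) ∘ q a, (hq a).axisChain.map _ _⟩
  have cells_inj : Function.Injective cells := fun a b hab => hinj <| by
    ext i
    simp only [traceOn, mem_ofPred_eq, (hq _).im_eq, (hr i).im_eq]
    exact chainTrace_inter_nonempty_congr (hrS i) (congrArg Subtype.val hab)
  calc Nat.card α ≤ _ := Nat.card_le_card_of_injective cells cells_inj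
    _ ≤ (2 * S.card + 1) ^ 2 * (2 * (2 * S.card + 1)) ^ n := by
      simpa only [Nat.card_fin] using card_axisChain_le (Fin (2 * S.card + 1)) n
    _ = 2 ^ n * (2 * S.card + 1) ^ (n + 2) := by
      rw [mul_pow]
      ring
    _ ≤ 2 ^ n * (4 * (m + 1) * Nat.card ι + 1) ^ (n + 2) := by
      gcongr 2 ^ n * (?_ + 1) ^ (n + 2)
      linarith

end TraceBound

/-! ### Properness from distinct coordinates -/

section Proper

open Filter Topology

variable {n m : ℕ} {q : Fin (n + 1) → Pt} {r : Fin (m + 1) → Pt}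

/-- Near `p` the set `A` contains the level set of `g` through `p`, so a connected set avoiding `A`
cannot pass from `g < g p` to `g > g p`; the set `B` does so along the path `f`. -/
lemma crossesAt_of_level {g : Pt → ℝ} {f : ℝ → Pt} {A B : Set Pt} {p : Pt} (hg : Continuous g)
    (hf : Continuous f) (hgf : Function.LeftInverse g f) (hfp : f (g p) = p)
    (hA : ∀ᶠ z in 𝓝 p, g z = g p → z ∈ A) (hB : ∀ᶠ s in 𝓝 (g p), f s ∈ B)
    (hBA : ∀ᶠ s in 𝓝[≠] (g p), f s ∉ A) : CrossesAt A B p := by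
  obtain ⟨ε₀, hε₀, hball⟩ := Metric.eventually_nhds_iff_ball.1 hA
  refine ⟨ε₀, hε₀, fun ε hε hle => ?_⟩
  have hfε : ∀ᶠ s in 𝓝 (g p), f s ∈ ball p ε :=
    hf.continuousAt.preimage_mem_nhds (hfp.symm ▸ ball_mem_nhds p hε)
  have hmem : ∀ᶠ s in 𝓝[≠] (g p), f s ∈ (B ∩ ball p ε) \ A :=
    ((hB.and hfε).filter_mono nhdsWithin_le_nhds).and hBA
  obtain ⟨s, hs, hsp⟩ := ((hmem.filter_mono (nhdsLT_le_nhdsNE _)).and self_mem_nhdsWithin).exists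
  obtain ⟨t, ht, hpt⟩ := ((hmem.filter_mono (nhdsGT_le_nhdsNE _)).and self_mem_nhdsWithin).exists
  refine ⟨f s, f t, hs, ht, fun C hC hconn ⟨hsC, htC⟩ => ?_⟩
  obtain ⟨z, hzC, hz⟩ : g p ∈ g '' C :=
    hconn.isPreconnected.intermediate_value hsC htC hg.continuousOn
      ⟨(hgf s).trans_le hsp.le, hpt.le.trans_eq (hgf t).symm⟩
  exact (hC hzC).2 (hball z (ball_subset_ball hle (hC hzC).1) hz)

lemma AxisChain.mem_segment (hq : AxisChain q) {p : Pt} (hp : p ∈ chainTrace q)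
    (hfst : p.1 ∉ coords q) :
    ∃ i : Fin n, p.1 ∈ uIoo (q i.castSucc).1 (q i.succ).1 ∧
      p.2 = (q i.castSucc).2 ∧ p.2 = (q i.succ).2 := by
  obtain ⟨i, hi⟩ := mem_chainTrace.1 hp
  rw [uIcc_prod_eq] at hi
  have hne (j) : p.1 ≠ (q j).1 := fun h => hfst (h ▸ fst_mem_coords q j)
  have h2 : (q i.castSucc).2 = (q i.succ).2 := (hq i).resolve_left fun h1 =>
    hne i.castSucc (by simpa only [← h1, uIcc_self, mem_singleton_iff] using hi.1)
  have hp2 : p.2 = (q i.succ).2 := by simpa only [h2, uIcc_self, mem_singleton_iff] using hi.2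
  refine ⟨i, ⟨lt_of_le_of_ne hi.1.1 ?_, lt_of_le_of_ne hi.1.2 ?_⟩, hp2.trans h2.symm, hp2⟩
  · rcases min_choice (q i.castSucc).1 (q i.succ).1 with h | h <;>
      exact fun h' => hne _ (h'.symm.trans h)
  · rcases max_choice (q i.castSucc).1 (q i.succ).1 with h | h <;>
      exact fun h' => hne _ (h'.trans h)

lemma AxisChain.snd_mem_coords_of_fst_notMem (hq : AxisChain q) {p : Pt} (hp : p ∈ chainTrace q)
    (hfst : p.1 ∉ coords q) : p.2 ∈ coords q := by
  obtain ⟨i, -, h, -⟩ := hq.mem_segment hp hfst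
  exact h ▸ snd_mem_coords q _

lemma AxisChain.eventually_mem_of_fst_notMem (hq : AxisChain q) {p : Pt}
    (hp : p ∈ chainTrace q) (hfst : p.1 ∉ coords q) :
    ∀ᶠ z in 𝓝 p, z.2 = p.2 → z ∈ chainTrace q := by
  obtain ⟨i, h1, h2, h2'⟩ := hq.mem_segment hp hfst
  have hnhds : Prod.fst ⁻¹' uIoo (q i.castSucc).1 (q i.succ).1 ∈ 𝓝 p :=
    continuous_fst.continuousAt.preimage_mem_nhds (isOpen_Ioo.mem_nhds h1)
  filter_upwards [hnhds] with z hz hzp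
  refine mem_chainTrace.2 ⟨i, ?_⟩
  rw [uIcc_prod_eq]
  refine ⟨uIoo_subset_uIcc_self hz, ?_⟩
  rw [← h2, ← h2', uIcc_self]
  exact hzp

lemma AxisChain.eventually_mem_of_snd_notMem (hq : AxisChain q) {p : Pt}
    (hp : p ∈ chainTrace q) (hsnd : p.2 ∉ coords q) :
    ∀ᶠ z in 𝓝 p, z.1 = p.1 → z ∈ chainTrace q := by
  have hswap := hq.swap.eventually_mem_of_fst_notMem (p := p.swap) (mem_chainTrace_swap.2 hp)
    (by rwa [coords_swap])
  filter_upwards [continuous_swap.continuousAt.eventually hswap] with z hz hzp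
  exact mem_chainTrace_swap.1 (hz hzp)

lemma AxisChain.eventually_notMem_of_snd_notMem (hq : AxisChain q) {y : ℝ} (hy : y ∉ coords q)
    (x : ℝ) : ∀ᶠ x' in 𝓝[≠] x, (x', y) ∉ chainTrace q := by
  have hfin : (coords q : Set ℝ)ᶜ ∈ 𝓝[≠] x :=
    nhdsNE_le_cofinite x (coords q).finite_toSet.compl_mem_cofinite
  filter_upwards [hfin] with x' hx' hmem
  exact hy (hq.snd_mem_coords_of_fst_notMem hmem hx')

lemma AxisChain.eventually_notMem_of_fst_notMem (hq : AxisChain q) {x : ℝ} (hx : x ∉ coords q)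
    (y : ℝ) : ∀ᶠ y' in 𝓝[≠] y, (x, y') ∉ chainTrace q := by
  filter_upwards [hq.swap.eventually_notMem_of_snd_notMem (by rwa [coords_swap]) y] with y' hy' hmem
  exact hy' (mem_chainTrace_swap.2 hmem)

lemma crossesAt_chainTrace (hq : AxisChain q) (hr : AxisChain r)
    (hqr : Disjoint (coords q) (coords r)) {p : Pt} (hpq : p ∈ chainTrace q)
    (hpr : p ∈ chainTrace r) : CrossesAt (chainTrace q) (chainTrace r) p := by
  have notMem_r {x} (hx : x ∈ coords q) : x ∉ coords r := Finset.disjoint_left.1 hqr hx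
  by_cases hfst : p.1 ∈ coords q
  · have hsnd : p.2 ∉ coords q := fun hsnd =>
      notMem_r hsnd (hr.snd_mem_coords_of_fst_notMem hpr (notMem_r hfst))
    have hr_near := hr.eventually_mem_of_fst_notMem hpr (notMem_r hfst)
    have hpath : Continuous fun x : ℝ => (x, p.2) := by fun_prop
    exact crossesAt_of_level continuous_fst hpath (fun _ => rfl) rfl
      (hq.eventually_mem_of_snd_notMem hpq hsnd)
      (((hpath.tendsto p.1).eventually hr_near).mono fun _ h => h rfl)
      (hq.eventually_notMem_of_snd_notMem hsnd _)
  · have hsnd := notMem_r (hq.snd_mem_coords_of_fst_notMem hpq hfst)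
    have hr_near := hr.eventually_mem_of_snd_notMem hpr hsnd
    have hpath : Continuous fun y : ℝ => (p.1, y) := by fun_prop
    exact crossesAt_of_level continuous_snd hpath (fun _ => rfl) rfl
      (hq.eventually_mem_of_fst_notMem hpq hfst)
      (((hpath.tendsto p.2).eventually hr_near).mono fun _ h => h rfl)
      (hq.eventually_notMem_of_fst_notMem hfst _)

lemma AxisChain.vertex_notMem_of_disjoint (hr : AxisChain r) (hqr : Disjoint (coords q) (coords r))
    (i : Fin (n + 1)) : q i ∉ chainTrace r := fun hmem =>
  Finset.disjoint_left.1 hqr (snd_mem_coords q i) <| hr.snd_mem_coords_of_fst_notMem hmem <|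
    Finset.disjoint_left.1 hqr (fst_mem_coords q i)

lemma HasVertices.fst_or_snd_mem_coords {γ : ℝ → Pt} (hγ : HasVertices γ q) {p : Pt}
    (hp : p ∈ Im γ) : p.1 ∈ coords q ∨ p.2 ∈ coords q :=
  or_iff_not_imp_left.2 (hγ.axisChain.snd_mem_coords_of_fst_notMem (hγ.im_eq ▸ hp))

lemma finite_inPts_of_disjoint_coords {V : Type*} [Finite V] {R : V → ℝ → Pt} {n : V → ℕ}
    {q : ∀ v, Fin (n v + 1) → Pt} (hR : ∀ v, HasVertices (R v) (q v))
    (hdisj : Pairwise fun u v => Disjoint (coords (q u)) (coords (q v))) : (InPts R).Finite := by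
  have notMem_of_ne {u v : V} (huv : u ≠ v) {x : ℝ} (hu : x ∈ coords (q u)) : x ∉ coords (q v) :=
    Finset.disjoint_left.1 (hdisj huv) hu
  let S : Set ℝ := ⋃ v, coords (q v)
  have hS : S.Finite := finite_iUnion fun v => (coords (q v)).finite_toSet
  have mem_S {x : ℝ} (v : V) (hx : x ∈ coords (q v)) : x ∈ S := mem_iUnion.2 ⟨v, hx⟩
  refine (hS.prod hS).subset fun p ⟨u, v, huv, hu, hv⟩ => ?_
  rcases (hR u).fst_or_snd_mem_coords hu with hu | hu <;>
    rcases (hR v).fst_or_snd_mem_coords hv with hv | hv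
  · exact absurd hv (notMem_of_ne huv hu)
  · exact ⟨mem_S u hu, mem_S v hv⟩
  · exact ⟨mem_S v hv, mem_S u hu⟩
  · exact absurd hv (notMem_of_ne huv hu)

theorem isProperRep_of_disjoint_coords {V : Type*} [Finite V] {R : V → ℝ → Pt} {n : V → ℕ}
    {q : ∀ v, Fin (n v + 1) → Pt} (hR : ∀ v, HasVertices (R v) (q v))
    (hdisj : Pairwise fun u v => Disjoint (coords (q u)) (coords (q v))) : IsProperRep R := by
  have notMem_of_ne {u v : V} (huv : u ≠ v) {x : ℝ} (hu : x ∈ coords (q u)) : x ∉ coords (q v) :=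
    Finset.disjoint_left.1 (hdisj huv) hu
  refine ⟨finite_inPts_of_disjoint_coords hR hdisj,
    fun p u v w huv huw hvw ⟨hu, hv, hw⟩ => ?noTriplePoint,
    fun u v huv => ?endpoints, fun u v huv p ⟨hu, hv⟩ => ?crossing⟩
  case noTriplePoint =>
    -- By pigeonhole two of the curves would share a coordinate of `p`.
    have := (hR u).fst_or_snd_mem_coords hu
    have := (hR v).fst_or_snd_mem_coords hv
    have := (hR w).fst_or_snd_mem_coords hw
    grind
  case endpoints =>
    rw [(hR u).start, (hR u).finish, (hR v).im_eq]
    exact ⟨(hR v).axisChain.vertex_notMem_of_disjoint (hdisj huv) _,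
      (hR v).axisChain.vertex_notMem_of_disjoint (hdisj huv) _⟩
  case crossing =>
    rw [(hR u).im_eq] at hu ⊢
    rw [(hR v).im_eq] at hv ⊢
    exact ⟨crossesAt_chainTrace (hR u).axisChain (hR v).axisChain (hdisj huv) hu hv,
      crossesAt_chainTrace (hR v).axisChain (hR u).axisChain (hdisj huv).symm hv hu⟩

end Proper

/-! ### Curves through monotone chains -/

section Staircase

variable {n : ℕ} {q : Fin (n + 1) → Pt}

/-- A monotone axis-parallel chain with distinct ends. Its segments may be degenerate. -/
structure IsStaircase (q : Fin (n + 1) → Pt) : Prop where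
  axisChain : AxisChain q
  monotone : Monotone q
  first_ne_last : q 0 ≠ q (Fin.last n)

/-- The coordinate sum, normalized to be `0` at the first and `1` at the last point of `q`. -/
noncomputable def progress (q : Fin (n + 1) → Pt) (p : Pt) : ℝ :=
  ((p.1 + p.2) - ((q 0).1 + (q 0).2)) /
    (((q (Fin.last n)).1 + (q (Fin.last n)).2) - ((q 0).1 + (q 0).2))

/-- The curve with trace `chainTrace q` parametrized by `progress q`, for a staircase `q`. -/
noncomputable def chainCurve (q : Fin (n + 1) → Pt) : ℝ → Pt :=
  Function.invFunOn (progress q) (chainTrace q)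

lemma uIcc_castSucc_succ_of_monotone {α : Type*} [Lattice α] {q : Fin (n + 1) → α}
    (hq : Monotone q) (i : Fin n) :
    uIcc (q i.castSucc) (q i.succ) = Icc (q i.castSucc) (q i.succ) :=
  uIcc_of_le (hq i.castSucc_le_succ)

lemma strictMono_fst_add_snd : StrictMono fun p : Pt => p.1 + p.2 := fun _ _ h => by
  rcases Prod.lt_iff.1 h with h | h
  exacts [add_lt_add_of_lt_of_le h.1 h.2, add_lt_add_of_le_of_lt h.1 h.2]

lemma vertex_mem_chainTrace {α : Type*} [Lattice α] (hn : n ≠ 0) (q : Fin (n + 1) → α)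
    (j : Fin (n + 1)) : q j ∈ chainTrace q := by
  obtain ⟨m, rfl⟩ := Nat.exists_eq_succ_of_ne_zero hn
  cases j using Fin.cases with
  | zero => exact mem_chainTrace.2 ⟨0, left_mem_uIcc⟩
  | succ i => exact mem_chainTrace.2 ⟨i, right_mem_uIcc⟩

namespace IsStaircase

lemma first_lt_last (hq : IsStaircase q) : q 0 < q (Fin.last n) :=
  (hq.monotone (Fin.zero_le _)).lt_of_ne hq.first_ne_last

lemma strictMono_progress (hq : IsStaircase q) : StrictMono (progress q) := fun _ _ h =>
  div_lt_div_of_pos_right (sub_lt_sub_right (strictMono_fst_add_snd h) _)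
    (sub_pos.2 (strictMono_fst_add_snd hq.first_lt_last))

lemma isChain_box (hq : IsStaircase q) (i : Fin n) :
    IsChain (· ≤ ·) (Icc (q i.castSucc) (q i.succ)) := by
  intro p hp p' hp' _
  rcases hq.axisChain i with h | h
  · have heq : p.1 = p'.1 := by linarith [hp.1.1, hp.2.1, hp'.1.1, hp'.2.1]
    exact (le_total p.2 p'.2).imp (fun h => ⟨heq.le, h⟩) (fun h => ⟨heq.ge, h⟩)
  · have heq : p.2 = p'.2 := by linarith [hp.1.2, hp.2.2, hp'.1.2, hp'.2.2]
    exact (le_total p.1 p'.1).imp (fun h => ⟨h, heq.le⟩) (fun h => ⟨h, heq.ge⟩)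

lemma isChain_chainTrace (hq : IsStaircase q) : IsChain (· ≤ ·) (chainTrace q) := by
  have boxes {i j : Fin n} {p p' : Pt} (hij : i < j) (hp : p ∈ Icc (q i.castSucc) (q i.succ))
      (hp' : p' ∈ Icc (q j.castSucc) (q j.succ)) : p ≤ p' :=
    hp.2.trans ((hq.monotone (Fin.succ_le_castSucc_iff.2 hij)).trans hp'.1)
  intro p hp p' hp' hne
  obtain ⟨i, hi⟩ := mem_chainTrace.1 hp
  obtain ⟨j, hj⟩ := mem_chainTrace.1 hp'
  rw [uIcc_castSucc_succ_of_monotone hq.monotone] at hi hj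
  rcases lt_trichotomy i j with hij | rfl | hij
  exacts [.inl (boxes hij hi hj), hq.isChain_box i hi hj hne, .inr (boxes hij hj hi)]

lemma injOn_progress (hq : IsStaircase q) : InjOn (progress q) (chainTrace q) := by
  intro p hp p' hp' h
  by_contra hne
  rcases hq.isChain_chainTrace hp hp' hne with hle | hle
  · exact (hq.strictMono_progress (hle.lt_of_ne hne)).ne h
  · exact (hq.strictMono_progress (hle.lt_of_ne' hne)).ne' h

lemma chainCurve_eq (hq : IsStaircase q) {p : Pt} (hp : p ∈ chainTrace q) {x : ℝ}
    (hx : progress q p = x) : chainCurve q x = p :=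
  hx ▸ hq.injOn_progress.leftInvOn_invFunOn hp

lemma exists_axisAff_box (hq : IsStaircase q) (i : Fin n) : ∃ a d : Pt, (d.1 = 0 ∨ d.2 = 0) ∧
    ∀ x ∈ Icc (progress q (q i.castSucc)) (progress q (q i.succ)),
      (a.1 + x * d.1, a.2 + x * d.2) ∈ chainTrace q ∧
        progress q (a.1 + x * d.1, a.2 + x * d.2) = x := by
  have hD := sub_pos.2 (strictMono_fst_add_snd hq.first_lt_last)
  simp only [progress, mem_Icc, div_le_iff₀ hD, le_div_iff₀ hD, div_eq_iff hD.ne']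
  set A := (q 0).1 + (q 0).2
  set D := (q (Fin.last n)).1 + (q (Fin.last n)).2 - A
  have mem_trace {p : Pt} (hp : q i.castSucc ≤ p ∧ p ≤ q i.succ) : p ∈ chainTrace q :=
    mem_chainTrace.2 ⟨i, uIcc_castSucc_succ_of_monotone hq.monotone i ▸ hp⟩
  rcases hq.axisChain i with h | h
  · refine ⟨((q i.succ).1, A - (q i.succ).1), (0, D), .inl rfl, fun x hx => ⟨mem_trace ?_, ?_⟩⟩
    · simp only [Prod.le_def]
      constructor <;> constructor <;> linarith
    · simp only
      ring
  · refine ⟨(A - (q i.succ).2, (q i.succ).2), (D, 0), .inr rfl, fun x hx => ⟨mem_trace ?_, ?_⟩⟩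
    · simp only [Prod.le_def]
      constructor <;> constructor <;> linarith
    · simp only
      ring

lemma axisAffOn_chainCurve (hq : IsStaircase q) (i : Fin n) :
    AxisAffOn (chainCurve q) (progress q (q i.castSucc)) (progress q (q i.succ)) :=
  let ⟨a, d, hd, h⟩ := hq.exists_axisAff_box i
  ⟨a, d, hd, fun x hx => hq.chainCurve_eq (h x hx).1 (h x hx).2⟩

lemma progress_zero (q : Fin (n + 1) → Pt) : progress q (q 0) = 0 := by
  rw [progress, sub_self, zero_div]

lemma progress_last (hq : IsStaircase q) : progress q (q (Fin.last n)) = 1 :=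
  div_self (sub_pos.2 (strictMono_fst_add_snd hq.first_lt_last)).ne'

lemma monotone_progress_comp (hq : IsStaircase q) : Monotone (progress q ∘ q) :=
  hq.strictMono_progress.monotone.comp hq.monotone

lemma ne_zero (hq : IsStaircase q) : n ≠ 0 := by
  rintro rfl
  exact hq.first_ne_last rfl

lemma injOn_chainCurve (hq : IsStaircase q) : InjOn (chainCurve q) (Icc 0 1) := by
  refine LeftInvOn.injOn (f₁' := progress q) fun x hx => ?_
  obtain ⟨i, hi⟩ : ∃ i : Fin n, x ∈ Icc (progress q (q i.castSucc)) (progress q (q i.succ)) := by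
    rw [← progress_zero q, ← hq.progress_last] at hx
    exact mem_iUnion.1 ((iUnion_Icc_castSucc_succ hq.monotone_progress_comp hq.ne_zero).symm ▸ hx)
  obtain ⟨a, d, -, h⟩ := hq.exists_axisAff_box i
  exact Function.invFunOn_eq ⟨_, h x hi⟩

theorem isRectCurveN_chainCurve (hq : IsStaircase q) : IsRectCurveN n (chainCurve q) :=
  ⟨hq.injOn_chainCurve, progress q ∘ q, progress_zero q, hq.progress_last,
    hq.monotone_progress_comp, hq.axisAffOn_chainCurve⟩

theorem hasVertices_chainCurve (hq : IsStaircase q) : HasVertices (chainCurve q) q := by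
  have hcomp : chainCurve q ∘ progress q ∘ q = q :=
    funext fun j => hq.chainCurve_eq (vertex_mem_chainTrace hq.ne_zero q j) rfl
  simpa only [hcomp] using hasVertices_of_axisAffOn (γ := chainCurve q) (progress_zero q)
    hq.progress_last hq.monotone_progress_comp hq.axisAffOn_chainCurve

end IsStaircase
end Staircase

/-! ### Zigzags and rulers -/

section Zigzag

/-- The point with coordinates `u, v` in the frame used by the `j`-th segment of a zigzag: the axes
are exchanged when `j` is odd, so that the `j`-th segment always runs along the first axis. -/
def framePt (j : ℕ) (u v : ℝ) : Pt := if Even j then (u, v) else (v, u)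

/-- The staircase with successive bend coordinates `c 0, c 1, …`, that is
`(c 0, c 1), (c 2, c 1), (c 2, c 3), …`. -/
def zigzag (n : ℕ) (c : ℕ → ℝ) : Fin (n + 1) → Pt := fun i => framePt i (c i) (c (i + 1))

/-- The segment `{a} × [lo, hi]` in the frame of the `s`-th segment of a zigzag, perpendicular to
that segment; the last vertex is repeated to reach `n + 1` segments. -/
def ruler (n s : ℕ) (a lo hi : ℝ) : Fin (n + 2) → Pt :=
  Fin.cons (framePt s a lo) fun _ => framePt s a hi

variable {n s : ℕ} {c : ℕ → ℝ} {a lo hi : ℝ}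

lemma framePt_of_even_iff {i j : ℕ} (h : Even i ↔ Even j) : framePt i = framePt j := by
  simp only [funext_iff, framePt, h, implies_true]

lemma framePt_of_not_even_iff {i j : ℕ} (h : ¬(Even i ↔ Even j)) (u v : ℝ) :
    framePt i u v = framePt j v u := by
  unfold framePt
  split_ifs <;> tauto

lemma framePt_le_framePt {j : ℕ} {u v u' v' : ℝ} :
    framePt j u v ≤ framePt j u' v' ↔ u ≤ u' ∧ v ≤ v' := by
  unfold framePt
  split_ifs
  exacts [Prod.mk_le_mk, Prod.mk_le_mk.trans and_comm]

lemma framePt_fst_eq_or_snd_eq {j : ℕ} {u v u' v' : ℝ} :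
    ((framePt j u v).1 = (framePt j u' v').1 ∨ (framePt j u v).2 = (framePt j u' v').2) ↔
      u = u' ∨ v = v' := by
  unfold framePt
  split_ifs
  exacts [Iff.rfl, or_comm]

lemma uIcc_framePt_inter_nonempty {j : ℕ} {u v u' v' x y x' y' : ℝ} :
    (uIcc (framePt j u v) (framePt j u' v') ∩ uIcc (framePt j x y) (framePt j x' y')).Nonempty ↔
      (uIcc u u' ∩ uIcc x x').Nonempty ∧ (uIcc v v' ∩ uIcc y y').Nonempty := by
  unfold framePt
  split_ifs <;> simp only [uIcc_prod_eq, prod_inter_prod, prod_nonempty_iff, and_comm]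

lemma zigzag_succ (i : Fin n) :
    zigzag n c i.succ = framePt i (c (i + 2)) (c (i + 1)) := by
  rw [zigzag, Fin.val_succ, framePt_of_not_even_iff (j := i) (by rw [Nat.even_add_one]; tauto)]

lemma isStaircase_zigzag (hc : StrictMono c) (hn : n ≠ 0) : IsStaircase (zigzag n c) := by
  have hmono : Monotone (zigzag n c) := Fin.monotone_iff_le_succ.2 fun i => by
    rw [zigzag_succ]
    exact framePt_le_framePt.2 ⟨hc.monotone (Nat.le_add_right _ 2), le_rfl⟩
  refine ⟨fun i => ?_, hmono, fun h => ?_⟩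
  · rw [zigzag_succ]
    exact framePt_fst_eq_or_snd_eq.2 (.inr rfl)
  · obtain ⟨m, rfl⟩ := Nat.exists_eq_succ_of_ne_zero hn
    have hle : zigzag (m + 1) c (Fin.succ 0) ≤ zigzag (m + 1) c 0 :=
      (hmono (Fin.le_last _)).trans h.ge
    rw [zigzag_succ] at hle
    exact (hc two_pos).not_ge (framePt_le_framePt.1 hle).1

lemma isStaircase_ruler (hlohi : lo < hi) : IsStaircase (ruler n s a lo hi) where
  axisChain i := by
    cases i using Fin.cases with
    | zero => exact framePt_fst_eq_or_snd_eq.2 (.inl rfl)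
    | succ i => exact .inl rfl
  monotone := Fin.monotone_iff_le_succ.2 fun i => by
    cases i using Fin.cases with
    | zero => exact framePt_le_framePt.2 ⟨le_rfl, hlohi.le⟩
    | succ i => exact le_rfl
  first_ne_last h := hlohi.not_ge (framePt_le_framePt.1 h.ge).2

lemma chainTrace_ruler :
    chainTrace (ruler n s a lo hi) = uIcc (framePt s a lo) (framePt s a hi) := by
  refine Subset.antisymm (iUnion_subset fun i => ?_) (subset_iUnion_of_subset 0 subset_rfl)
  cases i using Fin.cases with
  | zero => exact subset_rfl
  | succ i => exact uIcc_subset_uIcc_right right_mem_uIcc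

/-- A ruler meets only the segment it is perpendicular to: it is too short to reach other
perpendicular segments, and the parallel ones lie on different lines. -/
lemma zigzag_inter_ruler_nonempty {m : ℕ} (hc : Monotone c) (hs : s < n) (ha : ∀ j, c j ≠ a)
    (hwindow : ∀ j, c j ∈ Icc lo hi ↔ j = s + 1) :
    (chainTrace (zigzag n c) ∩ chainTrace (ruler m s a lo hi)).Nonempty ↔
      a ∈ Icc (c s) (c (s + 2)) := by
  have hlohi : lo ≤ hi := let h := (hwindow (s + 1)).2 rfl; h.1.trans h.2
  rw [chainTrace_ruler, chainTrace, iUnion_inter, nonempty_iUnion]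
  have hseg (i : Fin n) : (uIcc (zigzag n c i.castSucc) (zigzag n c i.succ) ∩
      uIcc (framePt s a lo) (framePt s a hi)).Nonempty ↔ i = s ∧ a ∈ Icc (c s) (c (s + 2)) := by
    rw [zigzag_succ, zigzag, Fin.val_castSucc]
    by_cases h : Even (i : ℕ) ↔ Even s
    · rw [framePt_of_even_iff h, uIcc_framePt_inter_nonempty, uIcc_self, uIcc_self,
        uIcc_of_le (hc (Nat.le_add_right i 2)), uIcc_of_le hlohi, inter_singleton_nonempty,
        singleton_inter_nonempty, hwindow, Nat.add_right_cancel_iff, and_comm]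
      exact and_congr_right fun h => by rw [h]
    · rw [framePt_of_not_even_iff h, framePt_of_not_even_iff h, uIcc_framePt_inter_nonempty,
        uIcc_self, uIcc_self, singleton_inter_nonempty, mem_singleton_iff]
      exact iff_of_false (fun hmem => ha _ hmem.1) fun hmem => h (by rw [hmem.1])
  simp only [hseg]
  exact ⟨fun ⟨_, _, h⟩ => h, fun h => ⟨⟨s, hs⟩, rfl, h⟩⟩

lemma forall_mem_coords_zigzag {P : ℝ → Prop} (hc : ∀ j, P (c j)) :
    ∀ x ∈ coords (zigzag n c), P x := by
  intro x hx
  obtain ⟨i, hi⟩ := mem_coords.1 hx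
  unfold zigzag framePt at hi
  split_ifs at hi <;> rcases hi with rfl | rfl <;> exact hc _

lemma forall_mem_coords_ruler {P : ℝ → Prop} (ha : P a) (hlo : P lo) (hhi : P hi) :
    ∀ x ∈ coords (ruler n s a lo hi), P x := by
  intro x hx
  obtain ⟨i, hi⟩ := mem_coords.1 hx
  unfold ruler framePt at hi
  cases i using Fin.cases <;> split_ifs at hi <;> rcases hi with rfl | rfl <;> assumption

end Zigzag

/-! ### The family of staircases and rulers -/

section Family

variable {k N : ℕ}

/-- The integer part of the `j`-th bend coordinate of the staircase encoding `F`: it lies in the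
window `(j * N, (j + 1) * N]`, at the place prescribed by `F j`. Indices are read modulo `k + 3`;
only those below `k + 3` matter. -/
def level (F : Fin (k + 3) → Fin N) (j : ℕ) : ℕ := j * N + F (Fin.ofNat (k + 3) j) + 1

lemma level_mem_Ioc (F : Fin (k + 3) → Fin N) (j : ℕ) :
    level F j ∈ Ioc (j * N) ((j + 1) * N) := by
  have := (F (Fin.ofNat (k + 3) j)).isLt
  constructor <;> simp only [level] <;> linarith

lemma strictMono_level (F : Fin (k + 3) → Fin N) : StrictMono (level F) :=
  strictMono_nat_of_lt_succ fun j =>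
    (level_mem_Ioc F j).2.trans_lt (level_mem_Ioc F (j + 1)).1

lemma level_mem_Ioc_iff (F : Fin (k + 3) → Fin N) {i j : ℕ} :
    level F i ∈ Ioc (j * N) ((j + 1) * N) ↔ i = j := by
  refine ⟨fun ⟨hlo, hhi⟩ => ?_, fun h => h ▸ level_mem_Ioc F i⟩
  have hi := level_mem_Ioc F i
  have hij : i < j + 1 := lt_of_mul_lt_mul_right (hi.1.trans_le hhi) (Nat.zero_le N)
  have hji : j < i + 1 := lt_of_mul_lt_mul_right (hlo.trans_le hi.2) (Nat.zero_le N)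
  omega

lemma eq_of_level_eq {F F' : Fin (k + 3) → Fin N} (h : ∀ j < k + 3, level F j = level F' j) :
    F = F' := by
  funext i
  have hi := h i i.isLt
  simp only [level, Fin.ofNat_eq_cast, Fin.cast_val_eq_self] at hi
  omega

lemma eq_of_forall_level_le_iff (hk : 1 ≤ k) {F F' : Fin (k + 3) → Fin N}
    (h : ∀ (s : Fin (k + 1)) (a : Fin ((k + 3) * N)),
      (level F s ≤ a ∧ a < level F (s + 2)) ↔ (level F' s ≤ a ∧ a < level F' (s + 2))) :
    F = F' := by
  have hlevels {s : ℕ} (hs : s < k + 1) :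
      level F s = level F' s ∧ level F (s + 2) = level F' (s + 2) := by
    have lt_of_lt_level (F : Fin (k + 3) → Fin N) {a : ℕ} (ha : a < level F (s + 2)) :
        a < (k + 3) * N :=
      ha.trans_le ((level_mem_Ioc F (s + 2)).2.trans (Nat.mul_le_mul_right N (by omega)))
    refine (Set.Ico_eq_Ico_iff (.inl (strictMono_level F (Nat.lt_add_of_pos_right two_pos)))).1 ?_
    ext a
    exact ⟨fun ha => (h ⟨s, hs⟩ ⟨a, lt_of_lt_level F ha.2⟩).1 ha,
      fun ha => (h ⟨s, hs⟩ ⟨a, lt_of_lt_level F' ha.2⟩).2 ha⟩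
  refine eq_of_level_eq fun j hj => ?_
  rcases lt_or_ge j (k + 1) with hjk | hjk
  · exact (hlevels hjk).1
  · obtain ⟨s, rfl⟩ := Nat.exists_eq_add_of_le' (show 2 ≤ j by omega)
    exact (hlevels (by omega)).2

lemma natCast_add_le_natCast_add {x y : ℕ} {η θ : ℝ} (hη : η ∈ Ioo 0 (1 / 2))
    (hθ : θ ∈ Ioo (1 / 2) 1) : (x + η ≤ y + θ ↔ x ≤ y) ∧ (y + θ ≤ x + η ↔ y < x) := by
  obtain ⟨hη0, hη⟩ := hη
  obtain ⟨hθ, hθ1⟩ := hθ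
  rcases le_or_gt x y with h | h
  · have : (x : ℝ) ≤ y := mod_cast h
    exact ⟨iff_of_true (by linarith) h, iff_of_false (by linarith) h.not_gt⟩
  · have : (y + 1 : ℝ) ≤ x := mod_cast h
    exact ⟨iff_of_false (by linarith) h.not_ge, iff_of_true (by linarith) h⟩

lemma exists_injective_forall_mem_of_infinite (α : Type*) [Countable α] {β : Type*} {s : Set β}
    (hs : s.Infinite) : ∃ f : α → β, Function.Injective f ∧ ∀ x, f x ∈ s := by
  obtain ⟨e, he⟩ := exists_injective_nat α
  let g := hs.natEmbedding
  exact ⟨fun x => g (e x), Subtype.val_injective.comp (g.injective.comp he), fun x => (g (e x)).2⟩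

lemma exists_injective_sum_forall_mem_Ioo (α β : Type*) [Countable α] [Countable β] {a b c : ℝ}
    (hab : a < b) (hbc : b < c) : ∃ f : α ⊕ β → ℝ, Function.Injective f ∧
      (∀ x, f (.inl x) ∈ Ioo a b) ∧ ∀ y, f (.inr y) ∈ Ioo b c := by
  obtain ⟨f, hf, hfab⟩ := exists_injective_forall_mem_of_infinite α (Ioo_infinite hab)
  obtain ⟨g, hg, hgbc⟩ := exists_injective_forall_mem_of_infinite β (Ioo_infinite hbc)
  exact ⟨Sum.elim f g, hf.sumElim hg fun x y => ((hfab x).2.trans (hgbc y).1).ne, hfab, hgbc⟩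

/-- The index of a member of the family: a staircase for every `F`, and a ruler for every frame
`s` and every integer height `a`. -/
abbrev FamilyIndex (k N : ℕ) : Type :=
  (Fin (k + 3) → Fin N) ⊕ Fin (k + 1) × Fin ((k + 3) * N)

/-- The vertices of the member `v`, at integer coordinates shifted by `t`. -/
def familyVertices (t : ℝ) : FamilyIndex k N → Fin (k + 2) → Pt
  | .inl F => zigzag (k + 1) fun j => level F j + t
  | .inr (s, a) => ruler k s (a + t) (((s + 1) * N : ℕ) + t) (((s + 1 + 1) * N : ℕ) + t)

lemma isStaircase_familyVertices (t : ℝ) (v : FamilyIndex k N) :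
    IsStaircase (familyVertices t v) := by
  rcases v with F | ⟨s, a⟩
  · exact isStaircase_zigzag (Nat.strictMono_cast.comp (strictMono_level F) |>.add_const t)
      k.succ_ne_zero
  · have hN : 0 < N := Nat.pos_of_mul_pos_left a.pos
    refine isStaircase_ruler (add_lt_add_left (Nat.cast_lt.2 ?_) t)
    exact Nat.mul_lt_mul_of_pos_right (Nat.lt_succ_self _) hN

lemma fract_eq_of_mem_coords_familyVertices {t : ℝ} (ht : t ∈ Ico 0 1) (v : FamilyIndex k N) :
    ∀ x ∈ coords (familyVertices t v), Int.fract x = t := by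
  have fract_natCast_add (m : ℕ) : Int.fract (m + t) = t :=
    (Int.fract_natCast_add m t).trans (Int.fract_eq_self.2 ht)
  rcases v with F | ⟨s, a⟩
  · exact forall_mem_coords_zigzag fun j => fract_natCast_add _
  · exact forall_mem_coords_ruler (fract_natCast_add _) (fract_natCast_add _) (fract_natCast_add _)

lemma familyVertices_inter_nonempty {η θ : ℝ} (hη : η ∈ Ioo 0 (1 / 2)) (hθ : θ ∈ Ioo (1 / 2) 1)
    (F : Fin (k + 3) → Fin N) (s : Fin (k + 1)) (a : Fin ((k + 3) * N)) :
    (chainTrace (familyVertices η (.inl F)) ∩ chainTrace (familyVertices θ (.inr (s, a)))).Nonempty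
      ↔ level F s ≤ a ∧ a < level F (s + 2) := by
  have hle {x y : ℕ} : x + η ≤ y + θ ↔ x ≤ y := (natCast_add_le_natCast_add hη hθ).1
  have hge {x y : ℕ} : y + θ ≤ x + η ↔ y < x := (natCast_add_le_natCast_add hη hθ).2
  have hne (x y : ℕ) : x + η ≠ y + θ := fun h => (hge.1 h.ge).not_ge (hle.1 h.le)
  have hmono : Monotone fun j => level F j + η :=
    (Nat.mono_cast.comp (strictMono_level F).monotone).add_const η
  refine (zigzag_inter_ruler_nonempty hmono s.isLt (fun j => hne _ a) fun j => ?_).trans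
    (and_congr hle hge)
  exact (and_congr hge hle).trans (level_mem_Ioc_iff F)

theorem exists_proper_family (k N : ℕ) : ∃ R : FamilyIndex k N → ℝ → Pt,
    (∀ v, IsKBendCurve k (R v)) ∧ IsProperRep R ∧ ∀ F s a,
      (Im (R (.inl F)) ∩ Im (R (.inr (s, a)))).Nonempty ↔
        level F s ≤ a ∧ a < level F (s + 2) := by
  obtain ⟨σ, hσ, hσl, hσr⟩ := exists_injective_sum_forall_mem_Ioo (Fin (k + 3) → Fin N)
    (Fin (k + 1) × Fin ((k + 3) * N)) (a := 0) (b := 1 / 2) (c := 1) (by norm_num) (by norm_num)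
  have hσ01 : ∀ v, σ v ∈ Ico (0 : ℝ) 1 := Sum.rec
    (fun F => ⟨(hσl F).1.le, (hσl F).2.trans (by norm_num)⟩)
    (fun b => ⟨(hσr b).1.le.trans' (by norm_num), (hσr b).2⟩)
  have hstair (v) : IsStaircase (familyVertices (σ v) v) := isStaircase_familyVertices _ _
  refine ⟨fun v => chainCurve (familyVertices (σ v) v), fun v => (hstair v).isRectCurveN_chainCurve,
    isProperRep_of_disjoint_coords (fun v => (hstair v).hasVertices_chainCurve) fun u v huv => ?_,
    fun F s a => ?_⟩
  · refine Finset.disjoint_left.2 fun x hxu hxv => huv (hσ ?_)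
    rw [← fract_eq_of_mem_coords_familyVertices (hσ01 u) u x hxu,
      fract_eq_of_mem_coords_familyVertices (hσ01 v) v x hxv]
  · rw [(hstair _).hasVertices_chainCurve.im_eq, (hstair _).hasVertices_chainCurve.im_eq]
    exact familyVertices_inter_nonempty (hσl F) (hσr (s, a)) F s a

end Family

/-! ### Intersection graphs -/

section IntersectionGraph

variable {V : Type*}

/-- The intersection graph of a family of curves. -/
def intersectionGraph (R : V → ℝ → Pt) : SimpleGraph V where
  Adj u v := u ≠ v ∧ (Im (R u) ∩ Im (R v)).Nonempty
  symm := ⟨fun _ _ h => ⟨h.1.symm, inter_comm _ _ ▸ h.2⟩⟩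
  loopless := ⟨fun _ h => h.1 rfl⟩

lemma represents_intersectionGraph (R : V → ℝ → Pt) : Represents (intersectionGraph R) R :=
  fun _ _ huv => (and_iff_right huv).symm

lemma IsProperRep.comp {R : V → ℝ → Pt} (hR : IsProperRep R) {W : Type*} {e : W → V}
    (he : Function.Injective e) : IsProperRep (R ∘ e) :=
  let ⟨hfin, htriple, hends, hcross⟩ := hR
  ⟨hfin.subset fun _ ⟨u, v, huv, hp⟩ => ⟨e u, e v, he.ne huv, hp⟩,
    fun p _ _ _ huv huw hvw => htriple p _ _ _ (he.ne huv) (he.ne huw) (he.ne hvw),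
    fun _ _ huv => hends _ _ (he.ne huv), fun _ _ huv => hcross _ _ (he.ne huv)⟩

lemma Represents.card_le {G : SimpleGraph V} {R : V → ℝ → Pt} (hG : Represents G R) {n : ℕ}
    (hR : ∀ v, IsRectCurveN n (R v)) {α β : Type*} [Finite β] {f : α → V} {g : β → V}
    (hfg : ∀ a b, f a ≠ g b) (hinj : Function.Injective fun a => {b | G.Adj (f a) (g b)}) :
    Nat.card α ≤ 2 ^ n * (4 * (n + 1) * Nat.card β + 1) ^ (n + 2) := by
  refine card_le_of_injective_traceOn (ρ := R ∘ g) (γ := R ∘ f) (fun b => hR _) (fun a => hR _) ?_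
  convert hinj using 2 with a
  exact Set.ext fun b => hG _ _ (hfg a b)

end IntersectionGraph

lemma exists_mul_pow_lt_pow (A B d : ℕ) : ∃ N, A * (B * N + 1) ^ d < N ^ (d + 1) := by
  refine ⟨A * (B + 1) ^ d + 1, ?_⟩
  set N := A * (B + 1) ^ d + 1
  calc A * (B * N + 1) ^ d ≤ A * ((B + 1) * N) ^ d := by
        gcongr
        rw [add_one_mul]
        gcongr
        omega
    _ = A * (B + 1) ^ d * N ^ d := by rw [mul_pow, mul_assoc]
    _ < N * N ^ d := by
        gcongr
        omega
    _ = N ^ (d + 1) := (pow_succ' N d).symm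

/-- For every integer `k ≥ 1` there is a graph `G` that has a *proper*
representation by axis-parallel curves with at most `k` bends each, but has no
representation (proper or not) by axis-parallel curves with at most `k-1` bends each. -/
theorem exists_graph_in_Bk_proper_not_in_Bk_minus_one (k : ℕ) (hk : 1 ≤ k) :
    ∃ (n : ℕ) (G : SimpleGraph (Fin n)) (R : Fin n → ℝ → Pt),
      (∀ v, IsKBendCurve k (R v)) ∧ Represents G R ∧ IsProperRep R ∧
      ¬ ∃ R' : Fin n → ℝ → Pt,
          (∀ v, IsKBendCurve (k - 1) (R' v)) ∧ Represents G R' := by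
  obtain ⟨N, hN⟩ := exists_mul_pow_lt_pow (2 ^ k) (4 * (k + 1) * ((k + 1) * (k + 3))) (k + 2)
  obtain ⟨R, hR, hproper, hmeet⟩ := exists_proper_family k N
  let e := Fintype.equivFin (FamilyIndex k N)
  refine ⟨_, intersectionGraph (R ∘ e.symm), R ∘ e.symm, fun v => hR _,
    represents_intersectionGraph _, hproper.comp e.symm.injective, fun ⟨R', hR', hG⟩ => ?_⟩
  have hR'k (v) : IsRectCurveN k (R' v) := Nat.sub_add_cancel hk ▸ hR' v
  have hne (F b) : e (.inl F) ≠ e (.inr b) := e.injective.ne Sum.inl_ne_inr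
  have hcard := hG.card_le hR'k hne fun F F' h => eq_of_forall_level_le_iff hk fun s a => by
    simpa [intersectionGraph, hmeet] using Set.ext_iff.1 h (s, a)
  simp only [Nat.card_fun, Nat.card_prod, Nat.card_fin, mul_assoc] at hcard hN
  exact hN.not_ge hcard
end

section
/- For every integer k ≥ 1, the class B_k-VPG is not contained in the class SEG; that is, there exists a simple graph that has a B_k-VPG representation (indeed already a B_1-VPG representation) but has no representation as an intersection graph of straight line segments in the plane. -/
open Set Metric

/-! The witness is the intersection graph of a large grid of L-shapes. For every row and column
there is a mark, an L-shape meeting both and no other row or column, and the marks at the upper left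
and lower right corners of any rectangle of the grid are joined by two chords, a low and a high one,
which cross only rows and columns through this rectangle.

Suppose this graph is represented by segments. By Ramsey's theorem we may restrict to rows and
columns whose lines see each other in a uniform way: the rows and the columns are then linearly
ordered by the signs of their equations, and every mark meets its row on the same side of any other
column. Uniform marks cannot stray from both their rows and their columns, since two of them and the
four lines they belong to would entangle in a triangle. So each mark, and with it each chord, lies
in the quadrilateral cut out by the nearby rows and columns. A low chord and a high chord chosen to
cross then lie on opposite sides of a diagonal of a rectangle, and are disjoint. -/

/-! ### Ramsey's theorem for pairs and for grids -/

section Ramsey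

theorem exists_subset_card_eq_forall_eq {α κ : Type*} [Fintype κ] [Nonempty κ] {s : Finset α}
    (f : α → κ) {n : ℕ} (hn : Fintype.card κ * n ≤ s.card) :
    ∃ c, ∃ t ⊆ s, t.card = n ∧ ∀ x ∈ t, f x = c := by
  classical
  obtain ⟨c, -, hc⟩ := Finset.exists_le_card_fiber_of_mul_le_card_of_maps_to
    (fun x _ => Finset.mem_univ (f x)) Finset.univ_nonempty hn
  obtain ⟨t, ht, htn⟩ := Finset.exists_subset_card_eq hc
  exact ⟨c, t, ht.trans (Finset.filter_subset _ _), htn,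
    fun x hx => (Finset.mem_filter.1 (ht hx)).2⟩

/-- `T` is end-homogeneous for the colouring `χ` of pairs: the colour of a pair of elements of `T`
is the function `col` of its smaller element. -/
def EndHomogeneous {α κ : Type*} [LT α] (χ : α → α → κ) (T : Finset α) (col : α → κ) : Prop :=
  ∀ x ∈ T, ∀ y ∈ T, x < y → χ x y = col x

theorem EndHomogeneous.insert_min {α κ : Type*} [LinearOrder α] {χ : α → α → κ} {T : Finset α}
    {col : α → κ} (hT : EndHomogeneous χ T col) {m : α} {c : κ} (hm : ∀ x ∈ T, m < x)
    (hc : ∀ x ∈ T, χ m x = c) :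
    EndHomogeneous χ (insert m T) (Function.update col m c) := by
  intro x hx y hy hxy
  rcases Finset.mem_insert.1 hx with rfl | hxT
  · have hyT := (Finset.mem_insert.1 hy).resolve_left hxy.ne'
    rw [hc y hyT, Function.update_self]
  · have hyT := (Finset.mem_insert.1 hy).resolve_left fun h => (h ▸ hxy).not_gt (hm x hxT)
    rw [Function.update_of_ne (hm x hxT).ne', hT x hxT y hyT hxy]

variable (κ : Type*) [Finite κ]

theorem exists_endHomogeneous (n : ℕ) :
    ∃ N : ℕ, ∀ {α : Type*} [LinearOrder α] (χ : α → α → κ) (S : Finset α), N ≤ S.card →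
      ∃ T ⊆ S, T.card = n ∧ ∃ col, EndHomogeneous χ T col := by
  have := Fintype.ofFinite κ
  induction n with
  | zero =>
    exact ⟨0, fun χ S _ => ⟨∅, S.empty_subset, rfl, fun x => χ x x, by simp [EndHomogeneous]⟩⟩
  | succ n ih =>
    obtain ⟨N, hN⟩ := ih
    refine ⟨Fintype.card κ * N + 1, fun χ S hS => ?_⟩
    have hne : S.Nonempty := Finset.card_pos.1 (by lia)
    obtain ⟨m, hm, hmin⟩ := S.exists_minimal hne
    have : Nonempty κ := ⟨χ m m⟩
    obtain ⟨c, S', hS', hcard, hc⟩ := exists_subset_card_eq_forall_eq (χ m)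
      (s := S.erase m) (n := N) (by rw [Finset.card_erase_of_mem hm]; lia)
    obtain ⟨T, hTS, hTn, col, hT⟩ := hN χ S' hcard.ge
    have hTm : ∀ x ∈ T, m < x := fun x hx =>
      have hx' := Finset.mem_erase.1 (hS' (hTS hx))
      lt_of_le_of_ne ((le_total m x).elim id (hmin hx'.2)) hx'.1.symm
    exact ⟨insert m T,
      Finset.insert_subset hm (hTS.trans (hS'.trans (Finset.erase_subset _ _))),
      by rw [Finset.card_insert_of_notMem fun h => (hTm m h).false, hTn],
      Function.update col m c, hT.insert_min hTm fun x hx => hc x (hTS hx)⟩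

theorem exists_orderEmbedding_forall_lt_eq (K : ℕ) :
    ∃ N : ℕ, ∀ χ : Fin N → Fin N → κ, ∃ f : Fin K ↪o Fin N, ∃ c,
      ∀ i i', i < i' → χ (f i) (f i') = c := by
  have := Fintype.ofFinite κ
  obtain ⟨N, hN⟩ := exists_endHomogeneous κ (Fintype.card κ * K + 1)
  refine ⟨N, fun χ => ?_⟩
  obtain ⟨T, -, hTcard, col, hT⟩ := hN χ Finset.univ (by rw [Finset.card_fin])
  have ⟨x, _⟩ : T.Nonempty := Finset.card_pos.1 (by lia)
  have : Nonempty κ := ⟨χ x x⟩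
  obtain ⟨c, T', hT', hcard, hc⟩ := exists_subset_card_eq_forall_eq col
    (s := T) (n := K) (by lia)
  refine ⟨T'.orderEmbOfFin hcard, c, fun i i' hi => ?_⟩
  have hmem i : T'.orderEmbOfFin hcard i ∈ T' := T'.orderEmbOfFin_mem hcard i
  rw [hT _ (hT' (hmem i)) _ (hT' (hmem i')) ((OrderEmbedding.lt_iff_lt _).2 hi), hc _ (hmem i)]

/-- Columns are chosen first, a pair of columns being coloured by the whole table of colours that
it induces on pairs of rows. -/
theorem exists_grid_forall_lt_eq (K : ℕ) :
    ∃ M N : ℕ, ∀ χ : Fin M → Fin M → Fin N → Fin N → κ,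
      ∃ (f : Fin K ↪o Fin M) (g : Fin K ↪o Fin N) (c : κ),
        ∀ i i', i < i' → ∀ j j', j < j' → χ (f i) (f i') (g j) (g j') = c := by
  obtain ⟨M, hM⟩ := exists_orderEmbedding_forall_lt_eq κ K
  obtain ⟨N, hN⟩ := exists_orderEmbedding_forall_lt_eq (Fin M → Fin M → κ) K
  refine ⟨M, N, fun χ => ?_⟩
  obtain ⟨g, table, hg⟩ := hN fun j j' i i' => χ i i' j j'
  obtain ⟨f, c, hf⟩ := hM table
  exact ⟨f, g, c, fun i i' hi j j' hj => by
    rw [← hf i i' hi, ← hg j j' hj]⟩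

theorem exists_grid_forall_lt_eq_and_forall_lt_eq (κ' : Type*) [Finite κ'] (K : ℕ) :
    ∃ M N : ℕ, ∀ (a : Fin M → Fin N → Fin N → κ) (b : Fin N → Fin M → Fin M → κ'),
      ∃ (f : Fin K ↪o Fin M) (g : Fin K ↪o Fin N) (c : κ) (d : κ'),
        (∀ i j j', j < j' → a (f i) (g j) (g j') = c) ∧
          ∀ j i i', i < i' → b (g j) (f i) (f i') = d := by
  obtain ⟨M, N, h⟩ := exists_grid_forall_lt_eq (κ × κ') (K + 1)
  refine ⟨M, N, fun a b => ?_⟩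
  obtain ⟨f, g, c, hc⟩ := h fun i i' j j' => (a i j j', b j i i')
  refine ⟨Fin.castSuccOrderEmb.trans f, Fin.castSuccOrderEmb.trans g, c.1, c.2,
    fun i j j' hj => ?_, fun j i i' hi => ?_⟩
  · exact congrArg Prod.fst (hc i.castSucc (Fin.last K) i.castSucc_lt_last _ _ hj)
  · exact congrArg Prod.snd (hc _ _ hi j.castSucc (Fin.last K) j.castSucc_lt_last)

end Ramsey

/-! ### Affine functionals on lines and on convex sets -/

section Lines

variable {E : Type*} [AddCommGroup E] [Module ℝ E] {a b c d z : E} {f g : E →ᵃ[ℝ] ℝ}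

theorem exists_eq_lineMap_of_collinear (h : Collinear ℝ {a, b, z}) (hab : a ≠ b) :
    ∃ t : ℝ, z = AffineMap.lineMap a b t := by
  obtain ⟨v, hv⟩ := (collinear_iff_of_mem (mem_insert a _)).1 h
  obtain ⟨r, rfl⟩ := hv b (by simp)
  obtain ⟨s, rfl⟩ := hv z (by simp)
  have hr : r ≠ 0 := by rintro rfl; simp at hab
  refine ⟨s / r, ?_⟩
  simp [AffineMap.lineMap_apply, smul_smul, div_mul_cancel₀ s hr]

theorem mem_of_collinear_of_le_of_le {C : Set E} (hC : Convex ℝ C) (ha : a ∈ C) (hb : b ∈ C)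
    (h : Collinear ℝ {a, b, z}) (hf : f a < f b) (hfz : f a ≤ f z) (hg : g a < g b)
    (hgz : g z ≤ g b) : z ∈ C := by
  obtain ⟨t, rfl⟩ := exists_eq_lineMap_of_collinear h (ne_of_apply_ne f hf.ne)
  rw [AffineMap.apply_lineMap] at hfz hgz
  exact hC.lineMap_mem ha hb
    ⟨(left_le_lineMap_iff_nonneg hf).1 hfz, (lineMap_le_right_iff_le_one hg).1 hgz⟩

theorem mem_segment_of_mul_neg (h : Collinear ℝ {a, b, z}) (hz : f z = 0)
    (hab : f a * f b < 0) : z ∈ segment ℝ a b := by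
  have hmem {a b : E} (h : Collinear ℝ {a, b, z}) (ha : f a < 0) (hb : 0 < f b) :
      z ∈ segment ℝ a b :=
    mem_of_collinear_of_le_of_le (convex_segment a b) (left_mem_segment ℝ a b)
      (right_mem_segment ℝ a b) h (ha.trans hb) (hz ▸ ha.le) (ha.trans hb) (hz ▸ hb.le)
  rcases mul_neg_iff.1 hab with ⟨ha, hb⟩ | ⟨ha, hb⟩
  · exact segment_symm ℝ a b ▸ hmem (insert_comm a b {z} ▸ h) hb ha
  · exact hmem h ha hb

theorem eq_of_collinear_of_eq_zero (h : Collinear ℝ {a, b, c}) (ha : f a = 0) (hb : f b = 0)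
    (hc : f c ≠ 0) : a = b := by
  by_contra hab
  obtain ⟨t, rfl⟩ := exists_eq_lineMap_of_collinear h hab
  exact hc (by rw [AffineMap.apply_lineMap, ha, hb, AffineMap.lineMap_same_apply])

theorem pos_of_mem_segment (ha : 0 < f a) (hb : 0 < f b) (hz : z ∈ segment ℝ a b) : 0 < f z :=
  ((convex_Ioi (0 : ℝ)).affine_preimage f).segment_subset ha hb hz

theorem mul_pos_of_mem_segment (hz : z ∈ segment ℝ a b) (ha : f a = 0) (hfz : f z ≠ 0) :
    0 < f z * f b := by
  rw [segment_eq_image_lineMap] at hz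
  obtain ⟨t, ht, rfl⟩ := hz
  have hft : f (AffineMap.lineMap a b t) = t * f b := by
    rw [AffineMap.apply_lineMap, ha, AffineMap.lineMap_apply_module, smul_zero, zero_add,
      smul_eq_mul]
  rw [hft] at hfz ⊢
  rw [mul_assoc]
  exact mul_pos (ht.1.lt_of_ne (left_ne_zero_of_mul hfz).symm)
    (mul_self_pos.2 (right_ne_zero_of_mul hfz))

theorem false_of_collinear_of_pos {p : Fin 3 → E} {F : Fin 3 → E →ᵃ[ℝ] ℝ}
    (hp : Collinear ℝ {p 0, p 1, p 2}) (h_zero : ∀ k, F k (p k) = 0)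
    (h_pos : ∀ k l, k ≠ l → 0 < F k (p l)) : False := by
  rcases hp.wbtw_or_wbtw_or_wbtw with h | h | h
  · exact (pos_of_mem_segment (h_pos 1 0 (by decide)) (h_pos 1 2 (by decide))
      (mem_segment_iff_wbtw.2 h)).ne' (h_zero 1)
  · exact (pos_of_mem_segment (h_pos 2 1 (by decide)) (h_pos 2 0 (by decide))
      (mem_segment_iff_wbtw.2 h)).ne' (h_zero 2)
  · exact (pos_of_mem_segment (h_pos 0 2 (by decide)) (h_pos 0 1 (by decide))
      (mem_segment_iff_wbtw.2 h)).ne' (h_zero 0)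

theorem nonempty_uIcc_inter_or (a b c d : ℝ) :
    (uIcc a b ∩ uIcc c d).Nonempty ∨ (uIcc a c ∩ uIcc b d).Nonempty := by
  simp only [uIcc, Icc_inter_Icc, nonempty_Icc]
  grind

/-- The cycle on four vertices is not an interval graph. -/
theorem not_collinear_of_mem_inter {h h' v v' : Set E} (ch : Convex ℝ h) (ch' : Convex ℝ h')
    (cv : Convex ℝ v) (cv' : Convex ℝ v') (dh : Disjoint h h') (dv : Disjoint v v')
    (ha : a ∈ h ∩ v) (hb : b ∈ h ∩ v') (hc : c ∈ h' ∩ v) (hd : d ∈ h' ∩ v') :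
    ¬ Collinear ℝ {a, b, c, d} := by
  intro hcol
  obtain ⟨p, e, hpe⟩ := (collinear_iff_exists_forall_eq_smul_vadd _).1 hcol
  let L : ℝ →ᵃ[ℝ] E := AffineMap.lineMap p (e +ᵥ p)
  have hL q (hq : q ∈ ({a, b, c, d} : Set E)) : ∃ r, L r = q := by
    obtain ⟨r, rfl⟩ := hpe q hq
    exact ⟨r, by simp [L, AffineMap.lineMap_apply]⟩
  obtain ⟨ra, rfl⟩ := hL a (by simp)
  obtain ⟨rb, rfl⟩ := hL b (by simp)
  obtain ⟨rc, rfl⟩ := hL c (by simp)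
  obtain ⟨rd, rfl⟩ := hL d (by simp)
  have hsub {C : Set E} (hC : Convex ℝ C) {r s : ℝ} (hr : L r ∈ C) (hs : L s ∈ C) :
      uIcc r s ⊆ L ⁻¹' C :=
    (hC.affine_preimage L).ordConnected.uIcc_subset hr hs
  rcases nonempty_uIcc_inter_or ra rb rc rd with ⟨t, ht, ht'⟩ | ⟨t, ht, ht'⟩
  · exact dh.notMem_of_mem_left (hsub ch ha.1 hb.1 ht) (hsub ch' hc.1 hd.1 ht')
  · exact dv.notMem_of_mem_left (hsub cv ha.2 hc.2 ht) (hsub cv' hb.2 hd.2 ht')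

theorem collinear_segment (a b : E) : Collinear ℝ (segment ℝ a b) := by
  rw [collinear_iff_of_mem (left_mem_segment ℝ a b)]
  refine ⟨b - a, fun z hz => ?_⟩
  rw [segment_eq_image'] at hz
  obtain ⟨t, -, rfl⟩ := hz
  exact ⟨t, add_comm _ _⟩

end Lines

theorem exists_affineMap_eq_zero_of_collinear {s : Set Pt} (hs : Collinear ℝ s) :
    ∃ f : Pt →ᵃ[ℝ] ℝ, (∀ z ∈ s, f z = 0) ∧ Collinear ℝ {z | f z = 0} := by
  obtain ⟨p, w, hw⟩ := (collinear_iff_exists_forall_eq_smul_vadd s).1 hs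
  obtain ⟨v, hv0, hv⟩ : ∃ v : Pt, v ≠ 0 ∧ ∀ z ∈ s, ∃ r : ℝ, z = r • v + p := by
    rcases eq_or_ne w 0 with rfl | hw0
    · exact ⟨(1, 0), by simp, fun z hz => ⟨0, by simpa using hw z hz⟩⟩
    · exact ⟨w, hw0, hw⟩
  let L : Pt →ₗ[ℝ] ℝ := v.1 • LinearMap.snd ℝ ℝ ℝ - v.2 • LinearMap.fst ℝ ℝ ℝ
  let f : Pt →ᵃ[ℝ] ℝ := L.toAffineMap - AffineMap.const ℝ Pt (L p)
  have hf z : f z = v.1 * (z.2 - p.2) - v.2 * (z.1 - p.1) := by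
    simp only [f, L, AffineMap.coe_sub, Pi.sub_apply, LinearMap.coe_toAffineMap,
      AffineMap.const_apply, LinearMap.sub_apply, LinearMap.smul_apply, LinearMap.fst_apply,
      LinearMap.snd_apply, smul_eq_mul]
    ring
  refine ⟨f, fun z hz => ?_, (collinear_iff_exists_forall_eq_smul_vadd _).2 ⟨p, v, fun z hz => ?_⟩⟩
  · obtain ⟨r, rfl⟩ := hv z hz
    rw [hf, Prod.fst_add, Prod.snd_add, Prod.smul_fst, Prod.smul_snd, smul_eq_mul, smul_eq_mul]
    ring
  have hz' : v.1 * (z.2 - p.2) = v.2 * (z.1 - p.1) := sub_eq_zero.1 ((hf z).symm.trans hz)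
  rcases eq_or_ne v.1 0 with hv1 | hv1
  · have hv2 : v.2 ≠ 0 := fun hv2 => hv0 (Prod.ext hv1 hv2)
    refine ⟨(z.2 - p.2) / v.2, Prod.ext ?_ ?_⟩ <;>
      simp only [vadd_eq_add, Prod.fst_add, Prod.snd_add, Prod.smul_fst, Prod.smul_snd, smul_eq_mul]
    · field_simp
      linear_combination -hz'
    · field_simp
      ring
  · refine ⟨(z.1 - p.1) / v.1, Prod.ext ?_ ?_⟩ <;>
      simp only [vadd_eq_add, Prod.fst_add, Prod.snd_add, Prod.smul_fst, Prod.smul_snd, smul_eq_mul]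
    · field_simp
      ring
    · field_simp
      linear_combination hz'

section Trapping

variable {E : Type*} [TopologicalSpace E] {ι : Type*} [Finite ι]

theorem forall_pos_of_isPreconnected {C : Set E} (hC : IsPreconnected C) {F : ι → E → ℝ}
    (hF : ∀ k, Continuous (F k)) {a : E} (ha : a ∈ C) (hpos : ∀ k, 0 < F k a)
    (hne : ∀ z ∈ C, (∀ k, 0 ≤ F k z) → ∀ k, F k z ≠ 0) {z : E} (hz : z ∈ C) (k : ι) :
    0 < F k z := by
  let U : Set E := ⋂ k, {z | 0 < F k z}
  have hU : IsOpen U := isOpen_iInter_of_finite fun k => isOpen_lt continuous_const (hF k)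
  have hcl : closure U ⊆ ⋂ k, {z | 0 ≤ F k z} :=
    closure_minimal (iInter_mono fun k z (hz : 0 < F k z) => hz.le)
      (isClosed_iInter fun k => isClosed_le continuous_const (hF k))
  have hsub : C ⊆ U := hC.subset_of_closure_inter_subset hU ⟨a, ha, mem_iInter.2 hpos⟩
    fun z ⟨hzU, hzC⟩ => mem_iInter.2 fun k =>
      have hz := mem_iInter.1 (hcl hzU)
      (hz k).lt_of_ne (hne z hzC hz k).symm
  exact mem_iInter.1 (hsub hz) k

end Trapping

/-! ### Convex sets trapped in a simplex -/

section Simplex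

variable {ι E : Type*} [NormedAddCommGroup E] [NormedSpace ℝ E]
  (B : AffineBasis ι ℝ E) {side : ι → Set E} {C : Set E} {k : ι} {a z : E}

theorem apply_eq_sum_coord_mul [Fintype ι] (f : E →ᵃ[ℝ] ℝ) (z : E) :
    f z = ∑ i, B.coord i z * f (B i) := by
  have h := Finset.univ.map_affineCombination B (fun i => B.coord i z)
    (B.sum_coord_apply_eq_one z) f
  rw [B.affineCombination_coord_eq_self, Finset.affineCombination_eq_linear_combination _ _ _
    (B.sum_coord_apply_eq_one z)] at h
  exact h

variable [Finite ι]

theorem mem_of_coord_eq_zero (hC : Convex ℝ C) (hB : ∀ i, i ≠ k → B i ∈ C)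
    (hz : ∀ i, 0 ≤ B.coord i z) (hk : B.coord k z = 0) : z ∈ C := by
  classical
  have := Fintype.ofFinite ι
  rw [← B.linear_combination_coord_eq_self z,
    ← Finset.sum_erase Finset.univ (a := k) (by rw [hk, zero_smul])]
  refine hC.sum_mem (fun i _ => hz i) ?_ fun i hi => hB i (Finset.ne_of_mem_erase hi)
  rw [Finset.sum_erase (f := fun i => B.coord i z) _ hk, B.sum_coord_apply_eq_one]

theorem coord_pos_of_ne_zero (hC : Convex ℝ C) (ha : a ∈ C) (ha_pos : ∀ i, 0 < B.coord i a)
    (hne : ∀ z ∈ C, (∀ i, 0 ≤ B.coord i z) → ∀ i, B.coord i z ≠ 0) (hz : z ∈ C) (i : ι) :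
    0 < B.coord i z :=
  have := B.finiteDimensional
  forall_pos_of_isPreconnected hC.isPreconnected
    (fun i => (B.coord i).continuous_of_finiteDimensional) ha ha_pos hne hz i

/-- A set entering the simplex through its `k`-th face can only leave it through that face. -/
theorem coord_pos_of_disjoint_sides (hside : ∀ i, Convex ℝ (side i))
    (hB : ∀ i j, j ≠ i → B j ∈ side i) (hC : Convex ℝ C) (hdisj : ∀ i ≠ k, Disjoint (side i) C)
    (ha : a ∈ C) (hak : 0 ≤ B.coord k a) (ha_pos : ∀ i ≠ k, 0 < B.coord i a)
    (hz : z ∈ C) (hzk : 0 ≤ B.coord k z) {i : ι} (hi : i ≠ k) : 0 < B.coord i z := by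
  have := B.finiteDimensional
  have hC' : Convex ℝ (C ∩ {z | 0 ≤ B.coord k z}) :=
    hC.inter ((convex_Ici 0).affine_preimage (B.coord k))
  refine forall_pos_of_isPreconnected (F := fun (i : {i // i ≠ k}) z => B.coord i z)
    hC'.isPreconnected (fun i => (B.coord i).continuous_of_finiteDimensional) ⟨ha, hak⟩
    (fun i => ha_pos i i.2) (fun y hy hy0 i hi0 => ?_) ⟨hz, hzk⟩ ⟨i, hi⟩
  have hy_nonneg j : 0 ≤ B.coord j y := by
    by_cases hj : j = k
    · exact hj ▸ hy.2
    · exact hy0 ⟨j, hj⟩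
  exact (hdisj i i.2).notMem_of_mem_left
    (mem_of_coord_eq_zero B (hside i) (hB i) hy_nonneg hi0) hy.1

end Simplex

section Triangle

theorem exists_affineBasis {p q r : Pt} (h : ¬ Collinear ℝ {p, q, r}) :
    ∃ B : AffineBasis (Fin 3) ℝ Pt, ⇑B = ![p, q, r] := by
  have hind := affineIndependent_iff_not_collinear_set.2 h
  exact ⟨⟨_, hind, hind.affineSpan_eq_top_iff_card_eq_finrank_add_one.2 (by simp)⟩, rfl⟩

theorem false_of_triangle {B : AffineBasis (Fin 3) ℝ Pt} {side : Fin 3 → Set Pt}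
    {v' h' x' : Set Pt} {q r X' Y' : Pt}
    (hside : ∀ i, Convex ℝ (side i)) (hB : ∀ i j, j ≠ i → B j ∈ side i)
    (cv' : Convex ℝ v') (ch' : Convex ℝ h') (cx' : Convex ℝ x')
    (hv' : ∀ i ≠ 1, Disjoint (side i) v') (hh' : ∀ i ≠ 2, Disjoint (side i) h')
    (hx' : ∀ i, Disjoint (side i) x')
    (hqv' : q ∈ v') (hq : q ∈ segment ℝ (B 0) (B 2))
    (hrh' : r ∈ h') (hr : B 0 ∈ segment ℝ (B 1) r)
    (hX' : X' ∈ x' ∩ v') (hX'_pos : 0 < B.coord 1 X') (hY' : Y' ∈ x' ∩ h') : False := by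
  have hmem i z (hz : ∀ i, 0 ≤ B.coord i z) (hi : B.coord i z = 0) : z ∈ side i :=
    mem_of_coord_eq_zero B (hside i) (hB i) hz hi
  have hq0 : B 0 ≠ q := fun e =>
    (hv' 2 (by decide)).notMem_of_mem_left (hB 2 0 (by decide)) (e ▸ hqv')
  have hq2 : B 2 ≠ q := fun e =>
    (hv' 0 (by decide)).notMem_of_mem_left (hB 0 2 (by decide)) (e ▸ hqv')
  have hqB : B.coord 1 q = 0 ∧ 0 < B.coord 0 q ∧ 0 < B.coord 2 q := by
    have hq_open := mem_openSegment_of_ne_left_right hq0 hq2 hq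
    rw [openSegment_eq_image_lineMap] at hq_open
    obtain ⟨t, ht, rfl⟩ := hq_open
    simp only [AffineMap.apply_lineMap, B.coord_apply]
    simpa [AffineMap.lineMap_apply_module] using ht.symm
  have hX'_pos i : 0 < B.coord i X' := by
    by_cases hi : i = 1
    · exact hi ▸ hX'_pos
    · refine coord_pos_of_disjoint_sides B hside hB cv' hv' hqv' hqB.1.ge ?_ hX'.2 hX'_pos.le hi
      simp [Fin.forall_fin_succ, hqB]
  have hY'_pos i : 0 < B.coord i Y' :=
    coord_pos_of_ne_zero B cx' hX'.1 hX'_pos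
      (fun z hz hz0 i hi => (hx' i).notMem_of_mem_left (hmem i z hz0 hi) hz) hY'.1 i
  have hr_pos i : 0 < B.coord i r := by
    refine coord_pos_of_ne_zero B ch' hY'.2 hY'_pos (fun z hz hz0 i hi => ?_) hrh' i
    by_cases hi2 : i = 2
    · subst hi2
      have hz_seg : z ∈ segment ℝ (B 0) (B 1) :=
        mem_of_coord_eq_zero B (convex_segment _ _)
          (by simp [Fin.forall_fin_succ, left_mem_segment, right_mem_segment]) hz0 hi
      have hz_btw : B 0 ∈ segment ℝ z r :=
        mem_segment_iff_wbtw.2 ((mem_segment_iff_wbtw.1 hr).trans_left_right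
          (mem_segment_iff_wbtw.1 hz_seg).symm)
      have hBh' : B 0 ∈ h' := ch'.segment_subset hz hrh' hz_btw
      exact (hh' 1 (by decide)).notMem_of_mem_left (hB 1 0 (by decide)) hBh'
    · exact (hh' i hi2).notMem_of_mem_left (hmem i z hz0 hi) hz
  have hB0 : 0 < B.coord 1 (B 0) := pos_of_mem_segment (by simp) (hr_pos 1) hr
  simp at hB0

theorem false_of_triangle_of_apply {v v' h h' x x' : Set Pt} {u : Pt →ᵃ[ℝ] ℝ} {p q r X X' Y Y' : Pt}
    (cv : Convex ℝ v) (cv' : Convex ℝ v') (ch : Convex ℝ h) (ch' : Convex ℝ h')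
    (cx : Convex ℝ x) (cx' : Convex ℝ x')
    (hvv' : Disjoint v v') (hhh' : Disjoint h h') (hxx' : Disjoint x x')
    (hxv' : Disjoint x v') (hxh' : Disjoint x h') (hvx' : Disjoint v x') (hhx' : Disjoint h x')
    (hp : p ∈ v ∩ h) (hX : X ∈ x ∩ v) (hY : Y ∈ x ∩ h) (hX' : X' ∈ x' ∩ v') (hY' : Y' ∈ x' ∩ h')
    (hqv' : q ∈ v') (hq : q ∈ segment ℝ p Y) (hrh' : r ∈ h') (hr : p ∈ segment ℝ X r)
    (hup : u p = 0) (huY : u Y = 0) (hu : 0 < u X * u X') : False := by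
  have huX : u X ≠ 0 := left_ne_zero_of_mul hu.ne'
  have hpY : p ≠ Y := by
    rintro rfl
    rw [segment_same, mem_singleton_iff] at hq
    exact hvv'.notMem_of_mem_left hp.1 (hq ▸ hqv')
  have hT : ¬ Collinear ℝ {p, X, Y} := fun hcol =>
    hpY (eq_of_collinear_of_eq_zero (by rwa [pair_comm]) hup huY huX)
  obtain ⟨B, hB⟩ := exists_affineBasis hT
  obtain ⟨rfl, rfl, rfl⟩ : B 0 = p ∧ B 1 = X ∧ B 2 = Y := by simp [hB]
  have huX' : u X' = B.coord 1 X' * u (B 1) := by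
    simp [apply_eq_sum_coord_mul B u X', Fin.sum_univ_succ, hup, huY]
  refine false_of_triangle (B := B) (side := ![x, h, v]) ?_ ?_ cv' ch' cx' ?_ ?_ ?_ hqv' hq hrh' hr
    hX' ?_ hY'
  · simp [Fin.forall_fin_succ, cx, ch, cv]
  · simp [Fin.forall_fin_succ, hp.1, hp.2, hX.1, hX.2, hY.1, hY.2]
  · simp [Fin.forall_fin_succ, hxv', hvv']
  · simp [Fin.forall_fin_succ, hxh', hhh']
  · simp [Fin.forall_fin_succ, hxx', hhx', hvx']
  · rw [huX', mul_left_comm] at hu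
    exact pos_of_mul_pos_left hu (mul_self_nonneg _)

end Triangle

/-! ### Grids of convex sets with marks -/

/-- A grid of rows `H i` and columns `V j`, each a convex subset of a line, together with a convex
mark for every row and column that meets only this row and this column. The points `P i j`, `X i j`
and `Y i j` are chosen crossings of row and column, of mark and column, and of mark and row. -/
structure MarkedGrid (ι κ : Type*) where
  H : ι → Set Pt
  V : κ → Set Pt
  mark : ι → κ → Set Pt
  P : ι → κ → Pt
  X : ι → κ → Pt
  Y : ι → κ → Pt
  convex_H : ∀ i, Convex ℝ (H i)
  convex_V : ∀ j, Convex ℝ (V j)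
  convex_mark : ∀ i j, Convex ℝ (mark i j)
  collinear_H : ∀ i, Collinear ℝ (H i)
  collinear_V : ∀ j, Collinear ℝ (V j)
  disjoint_H : ∀ {i i'}, i ≠ i' → Disjoint (H i) (H i')
  disjoint_V : ∀ {j j'}, j ≠ j' → Disjoint (V j) (V j')
  disjoint_mark : ∀ {i i' j j'}, i ≠ i' → j ≠ j' → Disjoint (mark i j) (mark i' j')
  disjoint_mark_H : ∀ {i i'} j, i ≠ i' → Disjoint (mark i j) (H i')
  disjoint_mark_V : ∀ {j j'} i, j ≠ j' → Disjoint (mark i j) (V j')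
  P_mem_H : ∀ i j, P i j ∈ H i
  P_mem_V : ∀ i j, P i j ∈ V j
  X_mem_mark : ∀ i j, X i j ∈ mark i j
  X_mem_V : ∀ i j, X i j ∈ V j
  Y_mem_mark : ∀ i j, Y i j ∈ mark i j
  Y_mem_H : ∀ i j, Y i j ∈ H i

namespace MarkedGrid

variable {ι κ : Type*}

/-- The grid with rows and columns exchanged. -/
def transpose (g : MarkedGrid ι κ) : MarkedGrid κ ι where
  H := g.V
  V := g.H
  mark j i := g.mark i j
  P j i := g.P i j
  X j i := g.Y i j
  Y j i := g.X i j
  convex_H := g.convex_V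
  convex_V := g.convex_H
  convex_mark j i := g.convex_mark i j
  collinear_H := g.collinear_V
  collinear_V := g.collinear_H
  disjoint_H := g.disjoint_V
  disjoint_V := g.disjoint_H
  disjoint_mark hj hi := g.disjoint_mark hi hj
  disjoint_mark_H i hj := g.disjoint_mark_V i hj
  disjoint_mark_V j hi := g.disjoint_mark_H j hi
  P_mem_H j i := g.P_mem_V i j
  P_mem_V j i := g.P_mem_H i j
  X_mem_mark j i := g.Y_mem_mark i j
  X_mem_V j i := g.Y_mem_H i j
  Y_mem_mark j i := g.X_mem_mark i j
  Y_mem_H j i := g.X_mem_V i j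

/-- The subgrid on the rows `f i` and the columns `k j`. -/
def restrict {ι' κ' : Type*} (g : MarkedGrid ι κ) (f : ι' ↪ ι) (k : κ' ↪ κ) :
    MarkedGrid ι' κ' where
  H i := g.H (f i)
  V j := g.V (k j)
  mark i j := g.mark (f i) (k j)
  P i j := g.P (f i) (k j)
  X i j := g.X (f i) (k j)
  Y i j := g.Y (f i) (k j)
  convex_H _ := g.convex_H _
  convex_V _ := g.convex_V _
  convex_mark _ _ := g.convex_mark _ _
  collinear_H _ := g.collinear_H _
  collinear_V _ := g.collinear_V _
  disjoint_H hi := g.disjoint_H (f.injective.ne hi)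
  disjoint_V hj := g.disjoint_V (k.injective.ne hj)
  disjoint_mark hi hj := g.disjoint_mark (f.injective.ne hi) (k.injective.ne hj)
  disjoint_mark_H _ hi := g.disjoint_mark_H _ (f.injective.ne hi)
  disjoint_mark_V _ hj := g.disjoint_mark_V _ (k.injective.ne hj)
  P_mem_H _ _ := g.P_mem_H _ _
  P_mem_V _ _ := g.P_mem_V _ _
  X_mem_mark _ _ := g.X_mem_mark _ _
  X_mem_V _ _ := g.X_mem_V _ _
  Y_mem_mark _ _ := g.Y_mem_mark _ _
  Y_mem_H _ _ := g.Y_mem_H _ _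

/-- `R j` is a linear equation of column `j`, and the signs of these equations at the crossings
show the columns in increasing order along every row. The signs at `Y i j` say moreover on which
side of the other columns the marks meet the rows, this being the same for all marks. -/
structure IsColumnFrame [LT κ] (g : MarkedGrid ι κ) (R : κ → Pt →ᵃ[ℝ] ℝ) : Prop where
  collinear_zero : ∀ j, Collinear ℝ {z | R j z = 0}
  eq_zero : ∀ {j z}, z ∈ g.V j → R j z = 0
  pos : ∀ i {j j'}, j < j' → 0 < R j (g.P i j')
  neg : ∀ i {j j'}, j < j' → R j' (g.P i j) < 0
  right : (∀ i j j', j < j' → R j' (g.Y i j) < 0) ∨ ∀ i j j', j < j' → 0 < R j' (g.Y i j)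
  left : (∀ i j j', j < j' → 0 < R j (g.Y i j')) ∨ ∀ i j j', j < j' → R j (g.Y i j') < 0

/-- Every mark meets its row between the two neighbouring columns. -/
def IsRowLocal [LT κ] (g : MarkedGrid ι κ) (R : κ → Pt →ᵃ[ℝ] ℝ) : Prop :=
  ∀ i j j', j < j' → 0 < R j (g.Y i j') ∧ R j' (g.Y i j) < 0

variable {g : MarkedGrid ι κ} {R : κ → Pt →ᵃ[ℝ] ℝ} {U : ι → Pt →ᵃ[ℝ] ℝ}

theorem collinear_of_mem_H (g : MarkedGrid ι κ) {i : ι} {a b c : Pt} (ha : a ∈ g.H i)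
    (hb : b ∈ g.H i) (hc : c ∈ g.H i) : Collinear ℝ {a, b, c} :=
  (g.collinear_H i).subset (by simp [insert_subset_iff, ha, hb, hc])

theorem collinear_of_mem_V (g : MarkedGrid ι κ) {j : κ} {a b c : Pt} (ha : a ∈ g.V j)
    (hb : b ∈ g.V j) (hc : c ∈ g.V j) : Collinear ℝ {a, b, c} :=
  g.transpose.collinear_of_mem_H ha hb hc

variable [Preorder κ]

theorem isRowLocal_or (hR : g.IsColumnFrame R) : g.IsRowLocal R ∨
    (∀ i j j', j < j' → R j (g.Y i j') < 0) ∨ ∀ i j j', j < j' → 0 < R j' (g.Y i j) := by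
  rcases hR.right with hright | hright
  · rcases hR.left with hleft | hleft
    · exact .inl fun i j j' hj => ⟨hleft i j j' hj, hright i j j' hj⟩
    · exact .inr (.inl hleft)
  · exact .inr (.inr hright)

theorem exists_ne_forall_mul_neg_of_not_isRowLocal (hR : g.IsColumnFrame R)
    (h : ¬ g.IsRowLocal R) {j₀ j₁ j₂ : κ} (h₀₁ : j₀ < j₁) (h₁₂ : j₁ < j₂) :
    ∃ j j', j ≠ j' ∧ ∀ i i', R j (g.Y i j) * R j (g.P i j') < 0 ∧
      0 < R j (g.Y i j) * R j (g.Y i' j') := by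
  have hY {i j j'} (hjj' : R j' (g.P i j) * R j' (g.Y i j) < 0) (hP : R j (g.P i j') ≠ 0) :
      0 < R j (g.P i j') * R j (g.Y i j) :=
    mul_pos_of_mem_segment (mem_segment_of_mul_neg
      (g.collinear_of_mem_H (g.P_mem_H i j) (g.Y_mem_H i j) (g.P_mem_H i j'))
      (hR.eq_zero (g.P_mem_V i j')) hjj') (hR.eq_zero (g.P_mem_V i j)) hP
  rcases (isRowLocal_or hR).resolve_left h with hleft | hright
  · refine ⟨j₁, j₂, h₁₂.ne, fun i i' => ?_⟩
    have hneg : R j₁ (g.Y i j₁) < 0 := neg_of_mul_pos_right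
      (hY (mul_neg_of_pos_of_neg (hR.pos i h₀₁) (hleft i j₀ j₁ h₀₁)) (hR.neg i h₀₁).ne)
      (hR.neg i h₀₁).le
    exact ⟨mul_neg_of_neg_of_pos hneg (hR.pos i h₁₂),
      mul_pos_of_neg_of_neg hneg (hleft i' j₁ j₂ h₁₂)⟩
  · refine ⟨j₁, j₀, h₀₁.ne', fun i i' => ?_⟩
    have hpos : 0 < R j₁ (g.Y i j₁) := pos_of_mul_pos_right
      (hY (mul_neg_of_neg_of_pos (hR.neg i h₁₂) (hright i j₁ j₂ h₁₂)) (hR.pos i h₁₂).ne')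
      (hR.pos i h₁₂).le
    exact ⟨mul_neg_of_pos_of_neg hpos (hR.neg i h₀₁), mul_pos hpos (hright i' j₀ j₁ h₀₁)⟩

variable [Preorder ι]

theorem false_of_separated (hR : g.IsColumnFrame R) (hU : g.transpose.IsColumnFrame U) {i i' : ι}
    {j j' : κ} (hi : i ≠ i') (hj : j ≠ j') (hY : R j' (g.P i j) * R j' (g.Y i j) < 0)
    (hX : U i (g.X i j) * U i (g.P i' j) < 0) (hXX' : 0 < U i (g.X i j) * U i (g.X i' j')) :
    False := by
  have hPY : g.P i j' ∈ segment ℝ (g.P i j) (g.Y i j) :=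
    mem_segment_of_mul_neg
      (g.collinear_of_mem_H (g.P_mem_H i j) (g.Y_mem_H i j) (g.P_mem_H i j'))
      (hR.eq_zero (g.P_mem_V i j')) hY
  have hXP : g.P i j ∈ segment ℝ (g.X i j) (g.P i' j) :=
    mem_segment_of_mul_neg
      (g.collinear_of_mem_V (g.X_mem_V i j) (g.P_mem_V i' j) (g.P_mem_V i j))
      (hU.eq_zero (g.P_mem_H i j)) hX
  exact false_of_triangle_of_apply (g.convex_V j) (g.convex_V j') (g.convex_H i) (g.convex_H i')
    (g.convex_mark i j) (g.convex_mark i' j') (g.disjoint_V hj) (g.disjoint_H hi)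
    (g.disjoint_mark hi hj) (g.disjoint_mark_V i hj) (g.disjoint_mark_H j hi)
    (g.disjoint_mark_V i' hj.symm).symm (g.disjoint_mark_H j' hi.symm).symm
    ⟨g.P_mem_V i j, g.P_mem_H i j⟩ ⟨g.X_mem_mark i j, g.X_mem_V i j⟩
    ⟨g.Y_mem_mark i j, g.Y_mem_H i j⟩ ⟨g.X_mem_mark i' j', g.X_mem_V i' j'⟩
    ⟨g.Y_mem_mark i' j', g.Y_mem_H i' j'⟩ (g.P_mem_V i j') hPY (g.P_mem_H i' j) hXP
    (hU.eq_zero (g.P_mem_H i j)) (hU.eq_zero (g.Y_mem_H i j)) hXX'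

theorem mem_V_of_eq_zero (hR : g.IsColumnFrame R) (hU : g.transpose.IsColumnFrame U) {i i' : ι}
    {j : κ} (hi : i < i') {z : Pt} (hz : R j z = 0) (hzi : 0 ≤ U i z) (hzi' : U i' z ≤ 0) :
    z ∈ g.V j := by
  have hcol : Collinear ℝ {g.P i j, g.P i' j, z} :=
    (hR.collinear_zero j).subset (by simp [insert_subset_iff, hz, hR.eq_zero (g.P_mem_V _ _)])
  have hUi : U i (g.P i j) = 0 := hU.eq_zero (g.P_mem_H i j)
  have hUi' : U i' (g.P i' j) = 0 := hU.eq_zero (g.P_mem_H i' j)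
  exact mem_of_collinear_of_le_of_le (g.convex_V j) (g.P_mem_V i j) (g.P_mem_V i' j) hcol
    (hUi.trans_lt (hU.pos j hi)) (hUi.trans_le hzi) ((hU.neg j hi).trans_eq hUi'.symm)
    (hzi'.trans_eq hUi'.symm)

theorem mem_H_of_eq_zero (hR : g.IsColumnFrame R) (hU : g.transpose.IsColumnFrame U) {i : ι}
    {j j' : κ} (hj : j < j') {z : Pt} (hz : U i z = 0) (hzj : 0 ≤ R j z) (hzj' : R j' z ≤ 0) :
    z ∈ g.H i :=
  mem_V_of_eq_zero hU hR hj hz hzj hzj'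

/-- The open quadrilateral between the lines of rows `i`, `i'` and of columns `j`, `j'`. -/
def quad (U : ι → Pt →ᵃ[ℝ] ℝ) (R : κ → Pt →ᵃ[ℝ] ℝ) (i i' : ι) (j j' : κ) : Set Pt :=
  {z | 0 < U i z ∧ U i' z < 0 ∧ 0 < R j z ∧ R j' z < 0}

theorem subset_quad (hR : g.IsColumnFrame R) (hU : g.transpose.IsColumnFrame U) {i i' : ι}
    {j j' : κ} (hi : i < i') (hj : j < j') {C : Set Pt} (hC : Convex ℝ C)
    (hCi : Disjoint C (g.H i)) (hCi' : Disjoint C (g.H i')) (hCj : Disjoint C (g.V j))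
    (hCj' : Disjoint C (g.V j')) (h : (C ∩ quad U R i i' j j').Nonempty) :
    C ⊆ quad U R i i' j j' := by
  obtain ⟨a, ha, ha_quad⟩ := h
  let F : Fin 4 → Pt →ᵃ[ℝ] ℝ := ![U i, -U i', R j, -R j']
  have hF z : (∀ k, 0 < F k z) ↔ z ∈ quad U R i i' j j' := by
    simp [F, quad, Fin.forall_fin_succ]
  refine fun z hz => (hF z).1 (forall_pos_of_isPreconnected hC.isPreconnected
    (fun k => (F k).continuous_of_finiteDimensional) ha ((hF a).2 ha_quad) (fun y hy hy0 => ?_) hz)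
  obtain ⟨hyi, hyi', hyj, hyj'⟩ : 0 ≤ U i y ∧ U i' y ≤ 0 ∧ 0 ≤ R j y ∧ R j' y ≤ 0 := by
    simpa [F, Fin.forall_fin_succ] using hy0
  suffices U i y ≠ 0 ∧ U i' y ≠ 0 ∧ R j y ≠ 0 ∧ R j' y ≠ 0 by
    simpa [F, Fin.forall_fin_succ] using this
  exact ⟨fun h0 => hCi.notMem_of_mem_left hy (mem_H_of_eq_zero hR hU hj h0 hyj hyj'),
    fun h0 => hCi'.notMem_of_mem_left hy (mem_H_of_eq_zero hR hU hj h0 hyj hyj'),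
    fun h0 => hCj.notMem_of_mem_left hy (mem_V_of_eq_zero hR hU hi h0 hyi hyi'),
    fun h0 => hCj'.notMem_of_mem_left hy (mem_V_of_eq_zero hR hU hi h0 hyi hyi')⟩

theorem isRowLocal_or_isRowLocal_transpose (hR : g.IsColumnFrame R)
    (hU : g.transpose.IsColumnFrame U) {i₀ i₁ i₂ : ι} (hi₀₁ : i₀ < i₁) (hi₁₂ : i₁ < i₂)
    {j₀ j₁ : κ} (hj : j₀ < j₁) : g.IsRowLocal R ∨ g.transpose.IsRowLocal U := by
  by_contra! ⟨hRl, hUl⟩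
  obtain ⟨i, i', hne, hi⟩ := exists_ne_forall_mul_neg_of_not_isRowLocal hU hUl hi₀₁ hi₁₂
  obtain ⟨j, j', hjj', hRj⟩ : ∃ j j', j ≠ j' ∧ R j' (g.P i j) * R j' (g.Y i j) < 0 := by
    rcases (isRowLocal_or hR).resolve_left hRl with hleft | hright
    · exact ⟨j₁, j₀, hj.ne', mul_neg_of_pos_of_neg (hR.pos i hj) (hleft i j₀ j₁ hj)⟩
    · exact ⟨j₀, j₁, hj.ne, mul_neg_of_neg_of_pos (hR.neg i hj) (hright i j₀ j₁ hj)⟩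
  exact false_of_separated hR hU hne hjj' hRj (hi j j').1 (hi j j').2

theorem mark_subset_quad_of_isRowLocal (hR : g.IsColumnFrame R)
    (hU : g.transpose.IsColumnFrame U) (hRl : g.IsRowLocal R) {i₀ i i₁ : ι} (hi₀ : i₀ < i)
    (hi₁ : i < i₁) {j₀ j j₁ : κ} (hj₀ : j₀ < j) (hj₁ : j < j₁) :
    g.mark i j ⊆ quad U R i₀ i₁ j₀ j₁ := by
  have h₀ : R j₀ (g.P i j₀) = 0 := hR.eq_zero (g.P_mem_V i j₀)
  have h₁ : R j₁ (g.P i j₁) = 0 := hR.eq_zero (g.P_mem_V i j₁)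
  have hYR₀ : 0 < R j₀ (g.Y i j) := (hRl i j₀ j hj₀).1
  have hYR₁ : R j₁ (g.Y i j) < 0 := (hRl i j j₁ hj₁).2
  have hYP : g.Y i j ∈ segment ℝ (g.P i j₀) (g.P i j₁) :=
    mem_of_collinear_of_le_of_le (convex_segment _ _) (left_mem_segment ℝ _ _)
      (right_mem_segment ℝ _ _)
      (g.collinear_of_mem_H (g.P_mem_H i j₀) (g.P_mem_H i j₁) (g.Y_mem_H i j))
      (h₀.trans_lt (hR.pos i (hj₀.trans hj₁))) (h₀.trans_le hYR₀.le)
      ((hR.neg i (hj₀.trans hj₁)).trans_eq h₁.symm) (hYR₁.le.trans_eq h₁.symm)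
  have hYU₀ : 0 < U i₀ (g.Y i j) := pos_of_mem_segment (hU.pos j₀ hi₀) (hU.pos j₁ hi₀) hYP
  have hYU₁ : U i₁ (g.Y i j) < 0 := neg_pos.1 <|
    pos_of_mem_segment (f := -U i₁) (neg_pos.2 (hU.neg j₀ hi₁)) (neg_pos.2 (hU.neg j₁ hi₁)) hYP
  exact subset_quad hR hU (hi₀.trans hi₁) (hj₀.trans hj₁) (g.convex_mark i j)
    (g.disjoint_mark_H j hi₀.ne') (g.disjoint_mark_H j hi₁.ne) (g.disjoint_mark_V i hj₀.ne')
    (g.disjoint_mark_V i hj₁.ne) ⟨_, g.Y_mem_mark i j, hYU₀, hYU₁, hYR₀, hYR₁⟩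

theorem mark_subset_quad (hR : g.IsColumnFrame R) (hU : g.transpose.IsColumnFrame U)
    {i₀ i i₁ : ι} (hi₀ : i₀ < i) (hi₁ : i < i₁) {j₀ j j₁ : κ} (hj₀ : j₀ < j) (hj₁ : j < j₁) :
    g.mark i j ⊆ quad U R i₀ i₁ j₀ j₁ := by
  rcases isRowLocal_or_isRowLocal_transpose hR hU hi₀ hi₁ hj₀ with hRl | hUl
  · exact mark_subset_quad_of_isRowLocal hR hU hRl hi₀ hi₁ hj₀ hj₁
  · intro z hz
    obtain ⟨hj₀z, hj₁z, hi₀z, hi₁z⟩ :=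
      mark_subset_quad_of_isRowLocal (g := g.transpose) hU hR hUl hj₀ hj₁ hi₀ hi₁ hz
    exact ⟨hi₀z, hi₁z, hj₀z, hj₁z⟩

/-- `S` joins the mark at row `c` and column `a` to the mark at row `d` and column `b`, and crosses
only columns between `a` and `b` and rows between `d` and `c`. -/
structure IsChord (g : MarkedGrid ι κ) (S : Set Pt) (a b : κ) (c d : ι) : Prop where
  convex : Convex ℝ S
  collinear : Collinear ℝ S
  nonempty_left : (S ∩ g.mark c a).Nonempty
  nonempty_right : (S ∩ g.mark d b).Nonempty
  disjoint_V : ∀ j, j < a ∨ b < j → Disjoint S (g.V j)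
  disjoint_H : ∀ i, i < d ∨ c < i → Disjoint S (g.H i)

theorem IsChord.restrict {ι' κ' : Type*} [Preorder ι'] [Preorder κ'] {S : Set Pt} (f : ι' ↪o ι)
    (k : κ' ↪o κ) {a b : κ'} {c d : ι'} (hS : g.IsChord S (k a) (k b) (f c) (f d)) :
    (g.restrict f.toEmbedding k.toEmbedding).IsChord S a b c d where
  convex := hS.convex
  collinear := hS.collinear
  nonempty_left := hS.nonempty_left
  nonempty_right := hS.nonempty_right
  disjoint_V j hj := hS.disjoint_V (k j) (hj.imp k.lt_iff_lt.2 k.lt_iff_lt.2)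
  disjoint_H i hi := hS.disjoint_H (f i) (hi.imp f.lt_iff_lt.2 f.lt_iff_lt.2)

theorem IsChord.subset_quad (hR : g.IsColumnFrame R) (hU : g.transpose.IsColumnFrame U)
    {S : Set Pt} {a b : κ} {c d : ι} (hS : g.IsChord S a b c d) (hab : a < b) (hdc : d < c)
    {i₀ i₁ : ι} {j₀ j₁ : κ} (hi₀ : i₀ < d) (hi₁ : c < i₁) (hj₀ : j₀ < a) (hj₁ : b < j₁) :
    S ⊆ quad U R i₀ i₁ j₀ j₁ := by
  obtain ⟨z, hzS, hz⟩ := hS.nonempty_left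
  exact MarkedGrid.subset_quad hR hU (hi₀.trans (hdc.trans hi₁)) (hj₀.trans (hab.trans hj₁))
    hS.convex (hS.disjoint_H _ (.inl hi₀)) (hS.disjoint_H _ (.inr hi₁))
    (hS.disjoint_V _ (.inl hj₀)) (hS.disjoint_V _ (.inr hj₁))
    ⟨z, hzS, mark_subset_quad hR hU (hi₀.trans hdc) hi₁ hj₀ (hab.trans hj₁) hz⟩

/-- Both sides are equations of the diagonal through `P i j'` and `P i' j`. -/
theorem exists_add_smul_eq_smul_add_smul (hR : g.IsColumnFrame R)
    (hU : g.transpose.IsColumnFrame U) {i i' : ι} (hi : i < i') {j j' : κ} (hj : j < j') :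
    ∃ m s t : ℝ, 0 < m ∧ 0 < s ∧ 0 < t ∧ U i' + m • R j = s • U i + t • R j' := by
  have hRV i j : R j (g.P i j) = 0 := hR.eq_zero (g.P_mem_V i j)
  have hUH i j : U i (g.P i j) = 0 := hU.eq_zero (g.P_mem_H i j)
  have hR_pos i : 0 < R j (g.P i j') := hR.pos i hj
  have hR_neg i : R j' (g.P i j) < 0 := hR.neg i hj
  have hU_pos j : 0 < U i (g.P i' j) := hU.pos j hi
  have hU_neg j : U i' (g.P i j) < 0 := hU.neg j hi
  have hT : ¬ Collinear ℝ {g.P i j, g.P i j', g.P i' j} := fun hcol =>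
    (hR_pos i).ne' <| eq_of_collinear_of_eq_zero hcol (hUH i j) (hUH i j') (hU_pos j).ne' ▸ hRV i j
  obtain ⟨B, hB⟩ := exists_affineBasis hT
  have ht : 0 < U i' (g.P i j) / R j' (g.P i j) := div_pos_of_neg_of_neg (hU_neg j) (hR_neg i)
  refine ⟨-U i' (g.P i j') / R j (g.P i j'),
    -(U i' (g.P i j) / R j' (g.P i j) * R j' (g.P i' j)) / U i (g.P i' j),
    U i' (g.P i j) / R j' (g.P i j), div_pos (neg_pos.2 (hU_neg j')) (hR_pos i),
    div_pos (neg_pos.2 (mul_neg_of_pos_of_neg ht (hR_neg i'))) (hU_pos j), ht, ?_⟩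
  ext z
  rw [apply_eq_sum_coord_mul B _ z, apply_eq_sum_coord_mul B _ z]
  refine Finset.sum_congr rfl fun k _ => congrArg (_ * ·) ?_
  have := (hR_pos i).ne'
  have := (hR_neg i).ne
  have := (hU_pos j).ne'
  simp only [AffineMap.coe_add, AffineMap.coe_smul, Pi.add_apply, Pi.smul_apply, smul_eq_mul, hB]
  fin_cases k <;>
    simp only [Fin.zero_eta, Fin.mk_one, Fin.reduceFinMk, Matrix.cons_val, hRV, hUH, mul_zero,
      add_zero, zero_add] <;>
    field_simp <;> ring

section Chords

variable {g : MarkedGrid (Fin 8) (Fin 8)} {R U : Fin 8 → Pt →ᵃ[ℝ] ℝ} {L S : Set Pt} {m s t : ℝ}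
  {p : Pt}

theorem IsChord.pos_of_mem (hR : g.IsColumnFrame R) (hU : g.transpose.IsColumnFrame U)
    (hL : g.IsChord L 3 6 6 3) (hm : 0 < m) (hs : 0 < s) (ht : 0 < t)
    (hδ : U 5 + m • R 2 = s • U 2 + t • R 5) (hp : p ∈ L) (hUp : U 5 p < 0) (hRp : R 5 p < 0) :
    0 < (U 5 + m • R 2) p := by
  obtain ⟨a, haL, ha⟩ := hL.nonempty_left
  obtain ⟨b, hbL, hb⟩ := hL.nonempty_right
  obtain ⟨ha₅, -, ha₂, ha₅'⟩ := mark_subset_quad hR hU (i₀ := 5) (i₁ := 7) (j₀ := 2) (j₁ := 5)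
    (by decide) (by decide) (by decide) (by decide) ha
  obtain ⟨hb₂, hb₅, hb₅', -⟩ := mark_subset_quad hR hU (i₀ := 2) (i₁ := 5) (j₀ := 5) (j₁ := 7)
    (by decide) (by decide) (by decide) (by decide) hb
  have hδa : 0 < (U 5 + m • R 2) a := add_pos ha₅ (mul_pos hm ha₂)
  have hδb : 0 < (U 5 + m • R 2) b := hδ ▸ add_pos (mul_pos hs hb₂) (mul_pos ht hb₅')
  exact mem_of_collinear_of_le_of_le (f := -U 5) (g := R 5)
    ((convex_Ioi (0 : ℝ)).affine_preimage (U 5 + m • R 2)) hδa hδb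
    (hL.collinear.subset (by simp [insert_subset_iff, haL, hbL, hp]))
    (neg_lt_neg (hb₅.trans ha₅)) (neg_le_neg (hUp.trans ha₅).le)
    (ha₅'.trans hb₅') (hRp.trans hb₅').le

theorem IsChord.neg_of_mem (hR : g.IsColumnFrame R) (hU : g.transpose.IsColumnFrame U)
    (hS : g.IsChord S 1 4 4 1) (hm : 0 < m) (hs : 0 < s) (ht : 0 < t)
    (hδ : U 5 + m • R 2 = s • U 2 + t • R 5) (hp : p ∈ S) (hUp : 0 < U 2 p) (hRp : 0 < R 2 p) :
    (U 5 + m • R 2) p < 0 := by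
  obtain ⟨c, hcS, hc⟩ := hS.nonempty_left
  obtain ⟨d, hdS, hd⟩ := hS.nonempty_right
  obtain ⟨hc₂, hc₅, -, hc₂'⟩ := mark_subset_quad hR hU (i₀ := 2) (i₁ := 5) (j₀ := 0) (j₁ := 2)
    (by decide) (by decide) (by decide) (by decide) hc
  obtain ⟨-, hd₂, hd₂', hd₅⟩ := mark_subset_quad hR hU (i₀ := 0) (i₁ := 2) (j₀ := 2) (j₁ := 5)
    (by decide) (by decide) (by decide) (by decide) hd
  have hδc : (U 5 + m • R 2) c < 0 := add_neg hc₅ (mul_neg_of_pos_of_neg hm hc₂')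
  have hδd : (U 5 + m • R 2) d < 0 :=
    hδ ▸ add_neg (mul_neg_of_pos_of_neg hs hd₂) (mul_neg_of_pos_of_neg ht hd₅)
  exact mem_of_collinear_of_le_of_le (f := R 2) (g := -U 2)
    ((convex_Iio (0 : ℝ)).affine_preimage (U 5 + m • R 2)) hδc hδd
    (hS.collinear.subset (by simp [insert_subset_iff, hcS, hdS, hp]))
    (hc₂'.trans hd₂') (hc₂'.trans hRp).le
    (neg_lt_neg (hd₂.trans hc₂)) (neg_le_neg (hd₂.trans hUp).le)

/-- A common point would lie on both sides of the diagonal through `P 2 5` and `P 5 2`. -/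
theorem IsChord.disjoint (hR : g.IsColumnFrame R) (hU : g.transpose.IsColumnFrame U)
    (hL : g.IsChord L 3 6 6 3) (hS : g.IsChord S 1 4 4 1) : Disjoint L S := by
  rw [Set.disjoint_left]
  intro p hpL hpS
  obtain ⟨hp₂, -, hp₂', -⟩ := hL.subset_quad hR hU (i₀ := 2) (i₁ := 7) (j₀ := 2) (j₁ := 7)
    (by decide) (by decide) (by decide) (by decide) (by decide) (by decide) hpL
  obtain ⟨-, hp₅, -, hp₅'⟩ := hS.subset_quad hR hU (i₀ := 0) (i₁ := 5) (j₀ := 0) (j₁ := 5)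
    (by decide) (by decide) (by decide) (by decide) (by decide) (by decide) hpS
  obtain ⟨m, s, t, hm, hs, ht, hδ⟩ :=
    exists_add_smul_eq_smul_add_smul hR hU (show (2 : Fin 8) < 5 by decide)
      (show (2 : Fin 8) < 5 by decide)
  exact (hL.pos_of_mem hR hU hm hs ht hδ hpL hp₅ hp₅').not_gt
    (hS.neg_of_mem hR hU hm hs ht hδ hpS hp₂ hp₂')

end Chords

end MarkedGrid

/-! ### Uniform subgrids -/

namespace MarkedGrid

variable {ι κ : Type*}

/-- The position of the columns `j` and `j'` and of the marks on them along row `i`, as signs of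
the equations `R` of the columns. -/
noncomputable def columnSigns (g : MarkedGrid ι κ) (R : κ → Pt →ᵃ[ℝ] ℝ) (i : ι) (j j' : κ) :
    SignType × SignType × SignType × SignType :=
  (SignType.sign (R j (g.P i j')), SignType.sign (R j' (g.P i j)), SignType.sign (R j' (g.Y i j)),
    SignType.sign (R j (g.Y i j')))

variable {g : MarkedGrid ι κ} {R : κ → Pt →ᵃ[ℝ] ℝ}

theorem columnSigns_neg (g : MarkedGrid ι κ) (R : κ → Pt →ᵃ[ℝ] ℝ) (i : ι) (j j' : κ) :
    g.columnSigns (-R) i j j' = -g.columnSigns R i j j' := by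
  simp [columnSigns, Left.sign_neg]

theorem apply_P_ne_zero (hR : ∀ j, Collinear ℝ {z | R j z = 0}) (hV : ∀ j, ∀ z ∈ g.V j, R j z = 0)
    {i i' : ι} (hi : i ≠ i') {j j' : κ} (hj : j ≠ j')
    (hsign : SignType.sign (R j (g.P i j')) = SignType.sign (R j (g.P i' j'))) :
    R j (g.P i j') ≠ 0 := by
  intro h0
  have h0' : R j (g.P i' j') = 0 := by rwa [h0, sign_zero, eq_comm, sign_eq_zero_iff] at hsign
  refine not_collinear_of_mem_inter (g.convex_H i) (g.convex_H i') (g.convex_V j) (g.convex_V j')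
    (g.disjoint_H hi) (g.disjoint_V hj) ⟨g.P_mem_H i j, g.P_mem_V i j⟩
    ⟨g.P_mem_H i j', g.P_mem_V i j'⟩ ⟨g.P_mem_H i' j, g.P_mem_V i' j⟩
    ⟨g.P_mem_H i' j', g.P_mem_V i' j'⟩ ((hR j).subset ?_)
  simp [insert_subset_iff, h0, h0', hV j _ (g.P_mem_V _ j)]

theorem apply_Y_ne_zero (hV : ∀ j, ∀ z ∈ g.V j, R j z = 0) {i : ι} {j j' : κ} (hj : j ≠ j')
    (hP : R j' (g.P i j) ≠ 0) : R j' (g.Y i j) ≠ 0 := by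
  intro h0
  have hPY : g.P i j' = g.Y i j :=
    eq_of_collinear_of_eq_zero
      (g.collinear_of_mem_H (g.P_mem_H i j') (g.Y_mem_H i j) (g.P_mem_H i j))
      (hV j' _ (g.P_mem_V i j')) h0 hP
  exact (g.disjoint_mark_V i hj).notMem_of_mem_left (g.Y_mem_mark i j) (hPY ▸ g.P_mem_V i j')

variable [Preorder κ] {i i' : ι} {j₀ j₁ j₂ : κ}

theorem isColumnFrame_of_columnSigns_eq (hR : ∀ j, Collinear ℝ {z | R j z = 0})
    (hV : ∀ j, ∀ z ∈ g.V j, R j z = 0) (hi : i ≠ i') (h₀₁ : j₀ < j₁) (h₁₂ : j₁ < j₂)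
    {σ₁ σ₂ σ₃ : SignType} (hσ : ∀ i j j', j < j' → g.columnSigns R i j j' = (1, σ₁, σ₂, σ₃)) :
    g.IsColumnFrame R := by
  simp only [columnSigns, Prod.mk.injEq, sign_eq_one_iff] at hσ
  choose hpos hσ₁ hσ₂ hσ₃ using hσ
  have hσ₁_eq : σ₁ = -1 := by
    rcases σ₁.trichotomy with h | rfl | rfl
    · exact h
    · exact absurd (sign_eq_zero_iff.1 (hσ₁ i j₀ j₁ h₀₁))
        (apply_P_ne_zero hR hV hi h₀₁.ne' ((hσ₁ i j₀ j₁ h₀₁).trans (hσ₁ i' j₀ j₁ h₀₁).symm))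
    have hpos' {j j'} (hj : j < j') : 0 < R j' (g.P i j) := sign_eq_one_iff.1 (hσ₁ i j j' hj)
    refine (false_of_collinear_of_pos (p := ![g.P i j₀, g.P i j₁, g.P i j₂])
      (F := ![R j₀, R j₁, R j₂])
      (g.collinear_of_mem_H (g.P_mem_H i j₀) (g.P_mem_H i j₁) (g.P_mem_H i j₂)) ?_ ?_).elim
    · simp [Fin.forall_fin_succ, hV _ _ (g.P_mem_V i _)]
    · simp [Fin.forall_fin_succ, hpos i _ _ h₀₁, hpos i _ _ h₁₂, hpos i _ _ (h₀₁.trans h₁₂),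
        hpos' h₀₁, hpos' h₁₂, hpos' (h₀₁.trans h₁₂)]
  have hneg i j j' (hj : j < j') : R j' (g.P i j) < 0 :=
    sign_eq_neg_one_iff.1 ((hσ₁ i j j' hj).trans hσ₁_eq)
  refine ⟨hR, fun {j z} => hV j z, fun i {j j'} => hpos i j j', fun i {j j'} => hneg i j j', ?_, ?_⟩
  · rcases σ₂.trichotomy with rfl | rfl | rfl
    · exact .inl fun i j j' hj => sign_eq_neg_one_iff.1 (hσ₂ i j j' hj)
    · exact absurd (sign_eq_zero_iff.1 (hσ₂ i j₀ j₁ h₀₁))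
        (apply_Y_ne_zero hV h₀₁.ne (hneg i j₀ j₁ h₀₁).ne)
    · exact .inr fun i j j' hj => sign_eq_one_iff.1 (hσ₂ i j j' hj)
  · rcases σ₃.trichotomy with rfl | rfl | rfl
    · exact .inr fun i j j' hj => sign_eq_neg_one_iff.1 (hσ₃ i j j' hj)
    · exact absurd (sign_eq_zero_iff.1 (hσ₃ i j₀ j₁ h₀₁))
        (apply_Y_ne_zero hV h₀₁.ne' (hpos i j₀ j₁ h₀₁).ne')
    · exact .inl fun i j j' hj => sign_eq_one_iff.1 (hσ₃ i j j' hj)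

theorem exists_isColumnFrame_of_columnSigns_eq (hR : ∀ j, Collinear ℝ {z | R j z = 0})
    (hV : ∀ j, ∀ z ∈ g.V j, R j z = 0) (hi : i ≠ i') (h₀₁ : j₀ < j₁) (h₁₂ : j₁ < j₂)
    {σ : SignType × SignType × SignType × SignType}
    (hσ : ∀ i j j', j < j' → g.columnSigns R i j j' = σ) :
    ∃ R : κ → Pt →ᵃ[ℝ] ℝ, g.IsColumnFrame R := by
  obtain ⟨σ₀, σ₁, σ₂, σ₃⟩ := σ
  have hσ₀ i : SignType.sign (R j₀ (g.P i j₁)) = σ₀ := congrArg Prod.fst (hσ i j₀ j₁ h₀₁)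
  obtain h | h := (apply_P_ne_zero hR hV hi h₀₁.ne ((hσ₀ i).trans (hσ₀ i').symm)).lt_or_gt
  · obtain rfl : σ₀ = -1 := (hσ₀ i).symm.trans (sign_eq_neg_one_iff.2 h)
    have hσ_neg i j j' (hj : j < j') : g.columnSigns (-R) i j j' = (1, -σ₁, -σ₂, -σ₃) := by
      rw [columnSigns_neg, hσ i j j' hj, Prod.neg_mk, neg_neg, Prod.neg_mk, Prod.neg_mk]
    exact ⟨-R, isColumnFrame_of_columnSigns_eq (by simpa using hR) (by simpa using hV) hi h₀₁ h₁₂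
      hσ_neg⟩
  · obtain rfl : σ₀ = 1 := (hσ₀ i).symm.trans (sign_eq_one_iff.2 h)
    exact ⟨R, isColumnFrame_of_columnSigns_eq hR hV hi h₀₁ h₁₂ hσ⟩

end MarkedGrid

theorem exists_isColumnFrame_restrict (n : ℕ) :
    ∃ M N, ∀ g : MarkedGrid (Fin M) (Fin N),
      ∃ (f : Fin (n + 3) ↪o Fin M) (k : Fin (n + 3) ↪o Fin N),
        (∃ R, (g.restrict f.toEmbedding k.toEmbedding).IsColumnFrame R) ∧
          ∃ U, (g.restrict f.toEmbedding k.toEmbedding).transpose.IsColumnFrame U := by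
  let S : Type := SignType × SignType × SignType × SignType
  obtain ⟨M, N, hMN⟩ := exists_grid_forall_lt_eq_and_forall_lt_eq S S (n + 3)
  refine ⟨M, N, fun g => ?_⟩
  choose R hV hR using fun j => exists_affineMap_eq_zero_of_collinear (g.collinear_V j)
  choose U hH hU using fun i => exists_affineMap_eq_zero_of_collinear (g.collinear_H i)
  obtain ⟨f, k, c, d, hc, hd⟩ := hMN (g.columnSigns R) (g.transpose.columnSigns U)
  exact ⟨f, k,
    MarkedGrid.exists_isColumnFrame_of_columnSigns_eq (fun j => hR (k j)) (fun j => hV (k j))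
      (show (0 : Fin (n + 3)) ≠ 1 by simp) (show (0 : Fin (n + 3)) < 1 by simp)
      (show (1 : Fin (n + 3)) < 2 by simp [Fin.lt_def, Nat.mod_eq_of_lt]) hc,
    MarkedGrid.exists_isColumnFrame_of_columnSigns_eq (fun i => hU (f i)) (fun i => hH (f i))
      (show (0 : Fin (n + 3)) ≠ 1 by simp) (show (0 : Fin (n + 3)) < 1 by simp)
      (show (1 : Fin (n + 3)) < 2 by simp [Fin.lt_def, Nat.mod_eq_of_lt]) hd⟩

/-! ### L-shapes on the integer grid -/

/-- An L-shape with corner `(x, y)`, a horizontal arm to `(x', y)` and a vertical arm to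
`(x, y')`. -/
structure LShape where
  x : ℤ
  y : ℤ
  x' : ℤ
  y' : ℤ
  x_ne : x ≠ x'
  y_ne : y ≠ y'

namespace LShape

/-- The L-shape run through from the end of its horizontal arm, with the corner at time `1 / 2`. -/
noncomputable def curve (u : LShape) (t : ℝ) : Pt :=
  (AffineMap.lineMap (u.x : ℝ) u.x' (1 - 2 * t)⁺, AffineMap.lineMap (u.y : ℝ) u.y' (1 - 2 * t)⁻)

theorem curve_injective (u : LShape) : Function.Injective u.curve := by
  intro s t h
  obtain ⟨hx, hy⟩ := Prod.ext_iff.1 h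
  have hpos := AffineMap.lineMap_injective ℝ (Int.cast_injective.ne u.x_ne) hx
  have hneg := AffineMap.lineMap_injective ℝ (Int.cast_injective.ne u.y_ne) hy
  have hst : 1 - 2 * s = 1 - 2 * t := by
    rw [← posPart_sub_negPart (1 - 2 * s), ← posPart_sub_negPart (1 - 2 * t), hpos, hneg]
  linarith

theorem curve_of_le (u : LShape) {t : ℝ} (ht : t ≤ 1 / 2) :
    u.curve t = (AffineMap.lineMap (u.x : ℝ) u.x' (1 - 2 * t), (u.y : ℝ)) := by
  have h : 0 ≤ 1 - 2 * t := by linarith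
  rw [curve, posPart_of_nonneg h, negPart_of_nonneg h, AffineMap.lineMap_apply_zero]

theorem curve_of_ge (u : LShape) {t : ℝ} (ht : 1 / 2 ≤ t) :
    u.curve t = ((u.x : ℝ), AffineMap.lineMap (u.y : ℝ) u.y' (2 * t - 1)) := by
  have h : 1 - 2 * t ≤ 0 := by linarith
  rw [curve, posPart_of_nonpos h, negPart_of_nonpos h, AffineMap.lineMap_apply_zero, neg_sub]

theorem isKBendCurve_curve (u : LShape) {k : ℕ} (hk : 1 ≤ k) : IsKBendCurve k u.curve := by
  refine ⟨u.curve_injective.injOn, fun i => min (i / 2) 1, by simp, ?_, fun i j hij => ?_,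
    fun i => ?_⟩
  · have hk' : (1 : ℝ) ≤ k := mod_cast hk
    simp only [Fin.val_last, Nat.cast_add, Nat.cast_one]
    exact min_eq_right (by linarith)
  · have hij' : (i : ℝ) ≤ j := mod_cast hij
    exact min_le_min_right 1 (by gcongr)
  · rcases Nat.eq_zero_or_pos i with hi | hi
    · refine ⟨(u.x', u.y), (2 * (u.x - u.x'), 0), .inr rfl, fun t ht => ?_⟩
      have ht2 : t ≤ 1 / 2 := ht.2.trans ((min_le_left _ _).trans (by simp [hi]))
      rw [u.curve_of_le ht2, AffineMap.lineMap_apply_ring']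
      ext <;> ring
    · refine ⟨(u.x, 2 * u.y - u.y'), (0, 2 * (u.y' - u.y)), .inl rfl, fun t ht => ?_⟩
      have hi' : (1 : ℝ) ≤ i := mod_cast hi
      have ht2 : 1 / 2 ≤ t := le_trans (le_min (by simpa using by linarith) (by norm_num)) ht.1
      rw [u.curve_of_ge ht2, AffineMap.lineMap_apply_ring']
      ext <;> ring

theorem Im_curve (u : LShape) :
    Im u.curve = uIcc (u.x : ℝ) u.x' ×ˢ {(u.y : ℝ)} ∪ {(u.x : ℝ)} ×ˢ uIcc (u.y : ℝ) u.y' := by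
  simp only [← segment_eq_uIcc, segment_eq_image_lineMap]
  ext ⟨p, q⟩
  constructor
  · rintro ⟨t, ht, h⟩
    rcases le_total t (1 / 2) with h2 | h2
    · rw [u.curve_of_le h2] at h
      obtain ⟨rfl, rfl⟩ := Prod.ext_iff.1 h
      exact .inl ⟨⟨1 - 2 * t, ⟨by linarith, by linarith [ht.1]⟩, rfl⟩, rfl⟩
    · rw [u.curve_of_ge h2] at h
      obtain ⟨rfl, rfl⟩ := Prod.ext_iff.1 h
      exact .inr ⟨rfl, 2 * t - 1, ⟨by linarith, by linarith [ht.2]⟩, rfl⟩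
  · rintro (⟨⟨r, hr, rfl⟩, rfl⟩ | ⟨rfl, r, hr, rfl⟩)
    · refine ⟨(1 - r) / 2, ⟨by linarith [hr.2], by linarith [hr.1]⟩, ?_⟩
      rw [u.curve_of_le (by linarith [hr.1])]
      congr 2
      ring
    · refine ⟨(1 + r) / 2, ⟨by linarith [hr.1], by linarith [hr.2]⟩, ?_⟩
      rw [u.curve_of_ge (by linarith [hr.1])]
      congr 2
      ring

theorem nonempty_Im_inter_Im_iff {u v : LShape} (hx : u.x ≠ v.x) (hy : u.y ≠ v.y) :
    (Im u.curve ∩ Im v.curve).Nonempty ↔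
      v.x ∈ uIcc u.x u.x' ∧ u.y ∈ uIcc v.y v.y' ∨ u.x ∈ uIcc v.x v.x' ∧ v.y ∈ uIcc u.y u.y' := by
  have hcast (a b c : ℤ) : (a : ℝ) ∈ uIcc (b : ℝ) c ↔ a ∈ uIcc b c := by
    simp only [mem_uIcc, Int.cast_le]
  simp only [Im_curve, ← hcast]
  constructor
  · rintro ⟨p, hu | hu, hv | hv⟩
    · exact absurd (Int.cast_injective (hu.2.symm.trans hv.2)) hy
    · exact .inl ⟨hv.1 ▸ hu.1, hu.2 ▸ hv.2⟩
    · exact .inr ⟨hu.1 ▸ hv.1, hv.2 ▸ hu.2⟩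
    · exact absurd (Int.cast_injective (hu.1.symm.trans hv.1)) hx
  · rintro (h | h)
    · exact ⟨(v.x, u.y), .inl ⟨h.1, rfl⟩, .inr ⟨rfl, h.2⟩⟩
    · exact ⟨(u.x, v.y), .inr ⟨rfl, h.2⟩, .inl ⟨h.1, rfl⟩⟩

end LShape

/-! ### A graph of L-shapes -/

/-- The vertices of a grid of `M` rows and `N` columns with a mark for every row and column and,
for columns `a`, `b` and rows `c`, `d`, two pieces joining the mark at row `c` and column `a` to the
mark at row `d` and column `b`, the one with its corner below, the other above them. -/
inductive Piece (M N : ℕ)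
  | row (i : Fin M)
  | col (j : Fin N)
  | mark (i : Fin M) (j : Fin N)
  | low (a b : Fin N) (c d : Fin M)
  | high (a b : Fin N) (c d : Fin M)
  deriving Fintype

namespace Piece

variable {M N : ℕ} {i i' c c' d d' : Fin M} {j j' a a' b b' : Fin N}

/-- The L-shape of a piece. Rows and columns are at distance `4` from each other, to leave room for
the corners of marks and chords. -/
def shape : Piece M N → LShape
  | row i => ⟨-i - 1, 4 * i + 4, 4 * N + 8, 4 * i + 5, by omega, by omega⟩
  | col j => ⟨4 * j + 4, -j - 1, 4 * j + 5, 4 * M + 8, by omega, by omega⟩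
  | mark i j => ⟨4 * j + 2, 4 * i + 6, 4 * j + 5, 4 * i + 3, by omega, by omega⟩
  | low a b c d => ⟨4 * a + 3, 4 * d + 3, 4 * b + 2, 4 * c + 6, by omega, by omega⟩
  | high a b c d => ⟨4 * b + 5, 4 * c + 5, 4 * a + 2, 4 * d + 6, by omega, by omega⟩

/-- The L-shapes of two pieces intersect. -/
def Meets (u v : Piece M N) : Prop := (Im u.shape.curve ∩ Im v.shape.curve).Nonempty

theorem meets_iff {u v : Piece M N} (hx : u.shape.x ≠ v.shape.x) (hy : u.shape.y ≠ v.shape.y) :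
    Meets u v ↔ v.shape.x ∈ uIcc u.shape.x u.shape.x' ∧ u.shape.y ∈ uIcc v.shape.y v.shape.y' ∨
      u.shape.x ∈ uIcc v.shape.x v.shape.x' ∧ v.shape.y ∈ uIcc u.shape.y u.shape.y' :=
  LShape.nonempty_Im_inter_Im_iff hx hy

theorem meets_row_col : Meets (row i : Piece M N) (col j) := by
  rw [meets_iff] <;> simp only [shape, mem_uIcc] <;> omega

theorem meets_mark_row : Meets (mark i j) (row i) := by
  rw [meets_iff] <;> simp only [shape, mem_uIcc] <;> omega

theorem meets_mark_col : Meets (mark i j) (col j) := by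
  rw [meets_iff] <;> simp only [shape, mem_uIcc] <;> omega

theorem not_meets_row_row (h : i ≠ i') : ¬ Meets (row i : Piece M N) (row i') := by
  rw [meets_iff] <;> simp only [shape, mem_uIcc] <;> omega

theorem not_meets_col_col (h : j ≠ j') : ¬ Meets (col j : Piece M N) (col j') := by
  rw [meets_iff] <;> simp only [shape, mem_uIcc] <;> omega

theorem not_meets_mark_row (h : i ≠ i') : ¬ Meets (mark i j) (row i') := by
  rw [meets_iff] <;> simp only [shape, mem_uIcc] <;> omega

theorem not_meets_mark_col (h : j ≠ j') : ¬ Meets (mark i j) (col j') := by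
  rw [meets_iff] <;> simp only [shape, mem_uIcc] <;> omega

theorem not_meets_mark_mark (hi : i ≠ i') (hj : j ≠ j') : ¬ Meets (mark i j) (mark i' j') := by
  rw [meets_iff] <;> simp only [shape, mem_uIcc] <;> omega

theorem meets_low_mark_left (hdc : d < c) : Meets (low a b c d) (mark c a) := by
  rw [meets_iff] <;> simp only [shape, mem_uIcc] <;> omega

theorem meets_low_mark_right (hab : a < b) (hdc : d < c) : Meets (low a b c d) (mark d b) := by
  rw [meets_iff] <;> simp only [shape, mem_uIcc] <;> omega

theorem not_meets_low_row (hdc : d < c) (hi : i < d ∨ c < i) : ¬ Meets (low a b c d) (row i) := by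
  rw [meets_iff] <;> simp only [shape, mem_uIcc] <;> omega

theorem not_meets_low_col (hab : a < b) (hj : j < a ∨ b < j) : ¬ Meets (low a b c d) (col j) := by
  rw [meets_iff] <;> simp only [shape, mem_uIcc] <;> omega

theorem meets_high_mark_left (hdc : d < c) : Meets (high a b c d) (mark c a) := by
  rw [meets_iff] <;> simp only [shape, mem_uIcc] <;> omega

theorem meets_high_mark_right (hdc : d < c) : Meets (high a b c d) (mark d b) := by
  rw [meets_iff] <;> simp only [shape, mem_uIcc] <;> omega

theorem not_meets_high_row (hdc : d < c) (hi : i < d ∨ c < i) :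
    ¬ Meets (high a b c d) (row i) := by
  rw [meets_iff] <;> simp only [shape, mem_uIcc] <;> omega

theorem not_meets_high_col (hab : a < b) (hj : j < a ∨ b < j) :
    ¬ Meets (high a b c d) (col j) := by
  rw [meets_iff] <;> simp only [shape, mem_uIcc] <;> omega

theorem meets_low_high (hab' : a ≤ b') (hb'b : b' < b) (hd'd : d' < d) (hdc' : d ≤ c') :
    Meets (low a b c d) (high a' b' c' d') := by
  rw [meets_iff] <;> simp only [shape, mem_uIcc] <;> omega

variable {F : Piece M N → Set Pt}

/-- `F` represents the intersections of the pieces by convex subsets of lines. -/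
structure IsRealization (F : Piece M N → Set Pt) : Prop where
  convex : ∀ u, Convex ℝ (F u)
  collinear : ∀ u, Collinear ℝ (F u)
  nonempty_iff : ∀ {u v}, u ≠ v → ((F u ∩ F v).Nonempty ↔ Meets u v)

namespace IsRealization

theorem disjoint (hF : IsRealization F) {u v : Piece M N} (huv : u ≠ v) (h : ¬ Meets u v) :
    Disjoint (F u) (F v) :=
  disjoint_iff_inter_eq_empty.2 (not_nonempty_iff_eq_empty.1 (mt (hF.nonempty_iff huv).1 h))

theorem nonempty (hF : IsRealization F) {u v : Piece M N} (huv : u ≠ v) (h : Meets u v) :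
    (F u ∩ F v).Nonempty :=
  (hF.nonempty_iff huv).2 h

/-- The rows, columns and marks of a realization form a grid. -/
noncomputable def toMarkedGrid (hF : IsRealization F) : MarkedGrid (Fin M) (Fin N) where
  H i := F (row i)
  V j := F (col j)
  mark i j := F (mark i j)
  P i j := (hF.nonempty (by simp) (meets_row_col (i := i) (j := j))).some
  X i j := (hF.nonempty (by simp) (meets_mark_col (i := i) (j := j))).some
  Y i j := (hF.nonempty (by simp) (meets_mark_row (i := i) (j := j))).some
  convex_H _ := hF.convex _
  convex_V _ := hF.convex _
  convex_mark _ _ := hF.convex _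
  collinear_H _ := hF.collinear _
  collinear_V _ := hF.collinear _
  disjoint_H hi := hF.disjoint (by simpa using hi) (not_meets_row_row hi)
  disjoint_V hj := hF.disjoint (by simpa using hj) (not_meets_col_col hj)
  disjoint_mark hi hj := hF.disjoint (by simp [hi]) (not_meets_mark_mark hi hj)
  disjoint_mark_H _ hi := hF.disjoint (by simp) (not_meets_mark_row hi)
  disjoint_mark_V _ hj := hF.disjoint (by simp) (not_meets_mark_col hj)
  P_mem_H i j := (hF.nonempty (by simp) meets_row_col).some_mem.1
  P_mem_V i j := (hF.nonempty (by simp) meets_row_col).some_mem.2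
  X_mem_mark i j := (hF.nonempty (by simp) meets_mark_col).some_mem.1
  X_mem_V i j := (hF.nonempty (by simp) meets_mark_col).some_mem.2
  Y_mem_mark i j := (hF.nonempty (by simp) meets_mark_row).some_mem.1
  Y_mem_H i j := (hF.nonempty (by simp) meets_mark_row).some_mem.2

theorem isChord_low (hF : IsRealization F) (hab : a < b) (hdc : d < c) :
    hF.toMarkedGrid.IsChord (F (low a b c d)) a b c d where
  convex := hF.convex _
  collinear := hF.collinear _
  nonempty_left := hF.nonempty (by simp) (meets_low_mark_left hdc)
  nonempty_right := hF.nonempty (by simp) (meets_low_mark_right hab hdc)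
  disjoint_V _ hj := hF.disjoint (by simp) (not_meets_low_col hab hj)
  disjoint_H _ hi := hF.disjoint (by simp) (not_meets_low_row hdc hi)

theorem isChord_high (hF : IsRealization F) (hab : a < b) (hdc : d < c) :
    hF.toMarkedGrid.IsChord (F (high a b c d)) a b c d where
  convex := hF.convex _
  collinear := hF.collinear _
  nonempty_left := hF.nonempty (by simp) (meets_high_mark_left hdc)
  nonempty_right := hF.nonempty (by simp) (meets_high_mark_right hdc)
  disjoint_V _ hj := hF.disjoint (by simp) (not_meets_high_col hab hj)
  disjoint_H _ hi := hF.disjoint (by simp) (not_meets_high_row hdc hi)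

end IsRealization

theorem exists_forall_not_isRealization :
    ∃ M N, ∀ F : Piece M N → Set Pt, ¬ IsRealization F := by
  obtain ⟨M, N, hMN⟩ := exists_isColumnFrame_restrict 5
  refine ⟨M, N, fun F hF => ?_⟩
  obtain ⟨f, k, ⟨R, hR⟩, U, hU⟩ := hMN hF.toMarkedGrid
  have hf {i i'} (h : i < i') : f i < f i' := f.lt_iff_lt.2 h
  have hk {j j'} (h : j < j') : k j < k j' := k.lt_iff_lt.2 h
  let L := low (k 3) (k 6) (f 6) (f 3)
  let S := high (k 1) (k 4) (f 4) (f 1)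
  have hL : (hF.toMarkedGrid.restrict f.toEmbedding k.toEmbedding).IsChord (F L) 3 6 6 3 :=
    (hF.isChord_low (hk (by decide)) (hf (by decide))).restrict f k
  have hS : (hF.toMarkedGrid.restrict f.toEmbedding k.toEmbedding).IsChord (F S) 1 4 4 1 :=
    (hF.isChord_high (hk (by decide)) (hf (by decide))).restrict f k
  have hLS : (F L ∩ F S).Nonempty := hF.nonempty (by simp [L, S])
    (meets_low_high (hk (by decide)).le (hk (by decide)) (hf (by decide)) (hf (by decide)).le)
  exact not_disjoint_iff_nonempty_inter.2 hLS (hL.disjoint hR hU hS)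

variable (M N) in
/-- The intersection graph of the L-shapes of the pieces. -/
def graph : SimpleGraph (Piece M N) where
  Adj u v := u ≠ v ∧ Meets u v
  symm := ⟨fun _ _ h => ⟨h.1.symm, by rw [Meets, inter_comm]; exact h.2⟩⟩
  loopless := ⟨fun _ h => h.1 rfl⟩

theorem inBkVPG_graph {k : ℕ} (hk : 1 ≤ k) : InBkVPG k (graph M N) :=
  ⟨fun u => u.shape.curve, fun u => u.shape.isKBendCurve_curve hk,
    fun _ _ huv => (and_iff_right huv).symm⟩

theorem exists_not_inSEG_graph : ∃ M N, ¬ InSEG (graph M N) := by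
  obtain ⟨M, N, h⟩ := exists_forall_not_isRealization
  refine ⟨M, N, fun ⟨S, _, hS⟩ => h (fun u => segment ℝ (S u).1 (S u).2) ⟨?_, ?_, ?_⟩⟩
  · exact fun u => convex_segment _ _
  · exact fun u => collinear_segment _ _
  · exact fun huv => (hS _ _ huv).trans (and_iff_right huv)

end Piece

section Embedding

variable {V W : Type*} {G : SimpleGraph V} {G' : SimpleGraph W}

theorem InBkVPG.of_embedding {k : ℕ} (h : InBkVPG k G') (e : G ↪g G') : InBkVPG k G := by
  obtain ⟨R, hR, hR'⟩ := h
  exact ⟨R ∘ e, fun v => hR (e v), fun u v huv =>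
    (hR' _ _ (e.injective.ne huv)).trans e.map_adj_iff⟩

theorem InSEG.of_embedding (h : InSEG G') (e : G ↪g G') : InSEG G := by
  obtain ⟨S, hS, hS'⟩ := h
  exact ⟨S ∘ e, fun v => hS (e v), fun u v huv =>
    (hS' _ _ (e.injective.ne huv)).trans e.map_adj_iff⟩

end Embedding

/-- For every `k ≥ 1`, `B_k`-VPG is not contained in SEG: there is a
graph with a `B_k`-VPG representation (indeed already a `B_1`-VPG representation) that
is not an intersection graph of straight line segments. -/
theorem Bk_VPG_not_subset_SEG (k : ℕ) (hk : 1 ≤ k) :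
    ∃ (n : ℕ) (G : SimpleGraph (Fin n)), InBkVPG 1 G ∧ InBkVPG k G ∧ ¬ InSEG G := by
  obtain ⟨M, N, hMN⟩ := Piece.exists_not_inSEG_graph
  let e := (Piece.graph M N).overFinIso rfl
  exact ⟨_, _, (Piece.inBkVPG_graph le_rfl).of_embedding e.symm.toEmbedding,
    (Piece.inBkVPG_graph hk).of_embedding e.symm.toEmbedding,
    fun h => hMN (h.of_embedding e.toEmbedding)⟩
end
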